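/- On an open set U ⊆ ℝⁿ, let ω^{ij} be a smooth antisymmetric bivector and Γ^i_{jk} smooth Christoffel symbols such that the pair (ω, ∇) is Poisson-compatible, and let H^{ij} := (1/4) ω^{is}(T^j_{nm;s} − 2 R^j_{nms}) dx^m ∧ dx^n. Over ℝ[λ]/(λ²) define for homogeneous ξ, η: ξ ∧₁ η := ξ ∧ η + (λ/2) ω^{ij} ∇_i ξ ∧ ∇_j η + λ (−1)^{|ξ|+1} H^{ij} ∧ (∂_i⌟ξ) ∧ (∂_j⌟η), extended λ-bilinearly. Then: (i) ∧₁ is associative; (ii) the undeformed exterior derivative d satisfies the graded Leibniz rule for ∧₁ (d(ξ ∧₁ η) = dξ ∧₁ η + (−1)^{|ξ|} ξ ∧₁ dη for homogeneous ξ) if and only if H^{ij} = H^{ji} for all i, j and dH^{ij} + Γ^i_{rp} dx^p ∧ H^{rj} + Γ^j_{rp} dx^p ∧ H^{ir} = 0 for all i, j. -/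

import Mathlib

namespace Stmt9

variable {n : ℕ}

/-- A point of the coordinate chart. -/
abbrev Pt (n : ℕ) := Fin n → ℝ

/-- The coefficient family of a differential form: a `p`-form is a family
`ξ_{a 0, …, a (p−1)}` of functions (only the first `p` index slots are used). -/
abbrev Form (n : ℕ) := (ℕ → Fin n) → Pt n → ℝ

/-- Partial derivative in the `i`-th coordinate direction. -/
noncomputable def pd (i : Fin n) (f : Pt n → ℝ) (x : Pt n) : ℝ :=
  fderiv ℝ f x (Pi.single i 1)

/-- Wedge product of a `p`-form and a `q`-form (coordinate formula). -/
noncomputable def wedge (p q : ℕ) (ξ η : Form n) : Form n := fun a x =>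
  ((p.factorial * q.factorial : ℕ) : ℝ)⁻¹ *
    ∑ σ : Equiv.Perm (Fin (p + q)),
      ((Equiv.Perm.sign σ : ℤ) : ℝ) *
        ξ (fun t => if h : t < p then a ((σ ⟨t, by omega⟩ : Fin (p + q)) : ℕ) else a t) x *
        η (fun t => if h : t < q then a ((σ ⟨p + t, by omega⟩ : Fin (p + q)) : ℕ) else a t) x

/-- Exterior derivative of a `p`-form:
`(dξ)_{a_0⋯a_p} = Σ_k (−1)^k ∂_{a_k} ξ_{a_0⋯(omit a_k)⋯a_p}`. -/
noncomputable def extd (p : ℕ) (ξ : Form n) : Form n := fun a x =>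
  ∑ k : Fin (p + 1),
    (-1 : ℝ) ^ (k : ℕ) *
      pd (a (k : ℕ)) (ξ (fun t => if t < (k : ℕ) then a t else a (t + 1))) x

/-- Interior product of a `p`-form with the `m`-th coordinate vector field
(zero on `0`-forms). -/
def intr (p : ℕ) (m : Fin n) (ξ : Form n) : Form n :=
  if p = 0 then (fun _ _ => 0)
  else fun a x => ξ (fun t => if t = 0 then m else a (t - 1)) x

/-- Interior product of a `p`-form with a vector field `v` (zero on `0`-forms). -/
noncomputable def iprod (p : ℕ) (v : Fin n → Pt n → ℝ) (ξ : Form n) : Form n :=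
  if p = 0 then (fun _ _ => 0)
  else fun a x => ∑ m, v m x * ξ (fun t => if t = 0 then m else a (t - 1)) x

/-- Covariant derivative of a `p`-form:
`(∇_i ξ)_{a_1⋯a_p} = ∂_i ξ_{a_1⋯a_p} − Σ_k Γ^m_{i a_k} ξ_{⋯ m ⋯}`. -/
noncomputable def nabla (Γ : Fin n → Fin n → Fin n → Pt n → ℝ) (i : Fin n) (p : ℕ)
    (ξ : Form n) : Form n := fun a x =>
  pd i (ξ a) x
    - ∑ k : Fin p, ∑ m, Γ m i (a (k : ℕ)) x * ξ (fun t => if t = (k : ℕ) then m else a t) x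

/-- Multiplication of a form by a scalar function. -/
def fmul (f : Pt n → ℝ) (ξ : Form n) : Form n := fun a x => f x * ξ a x

/-- `ξ` depends only on its first `p` index slots. -/
def DependsOn (p : ℕ) (ξ : Form n) : Prop :=
  ∀ a b : ℕ → Fin n, (∀ t, t < p → a t = b t) → ξ a = ξ b

/-- `ξ` is totally antisymmetric in its first `p` index slots. -/
def IsAnti (p : ℕ) (ξ : Form n) : Prop :=
  ∀ (a : ℕ → Fin n) (i j : ℕ), i < p → j < p → i ≠ j →
    ∀ x, ξ (fun t => a (Equiv.swap i j t)) x = - ξ a x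

/-- `ξ` has smooth coefficients on `U`. -/
def SmoothOn (U : Set (Pt n)) (ξ : Form n) : Prop :=
  ∀ a, ContDiffOn ℝ (⊤ : ℕ∞) (ξ a) U

/-- `ξ` is (the coefficient family of) a smooth `p`-form on `U`. -/
def IsPForm (U : Set (Pt n)) (p : ℕ) (ξ : Form n) : Prop :=
  DependsOn p ξ ∧ IsAnti p ξ ∧ SmoothOn U ξ

/-- Torsion `T^i_{jk} = Γ^i_{jk} - Γ^i_{kj}`. -/
def Tor (Γ : Fin n → Fin n → Fin n → Pt n → ℝ) (i j k : Fin n) (x : Pt n) : ℝ :=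
  Γ i j k x - Γ i k j x

/-- Curvature `R^l_{ijk} = ∂_j Γ^l_{ki} − ∂_k Γ^l_{ji} + Γ^m_{ki} Γ^l_{jm} − Γ^m_{ji} Γ^l_{km}`. -/
noncomputable def Rc (Γ : Fin n → Fin n → Fin n → Pt n → ℝ) (l i j k : Fin n)
    (x : Pt n) : ℝ :=
  pd j (Γ l k i) x - pd k (Γ l j i) x
    + ∑ m, Γ m k i x * Γ l j m x - ∑ m, Γ m j i x * Γ l k m x

/-- Covariant derivative of the torsion:
`T^j_{ab;s} = ∂_s T^j_{ab} + Γ^j_{sp} T^p_{ab} − Γ^p_{sa} T^j_{pb} − Γ^p_{sb} T^j_{ap}`. -/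
noncomputable def covT (Γ : Fin n → Fin n → Fin n → Pt n → ℝ) (j a b s : Fin n)
    (x : Pt n) : ℝ :=
  pd s (Tor Γ j a b) x + ∑ p, Γ j s p x * Tor Γ p a b x
    - ∑ p, Γ p s a x * Tor Γ j p b x - ∑ p, Γ p s b x * Tor Γ j a p x

/-- The pair `(ω, ∇)` is Poisson-compatible on `U`. -/
def PoissonCompat (U : Set (Pt n)) (ω : Fin n → Fin n → Pt n → ℝ)
    (Γ : Fin n → Fin n → Fin n → Pt n → ℝ) : Prop :=
  ∀ i j m, ∀ x ∈ U,
    pd m (ω i j) x + ∑ k, ω k j x * Γ i k m x + ∑ k, ω i k x * Γ j k m x = 0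

/-- The 2-form `H^{ij} = (1/4) ω^{is}(T^j_{nm;s} − 2 R^j_{nms}) dx^m ∧ dx^n`
(as a coefficient family, slots `(a 0, a 1) = (m, n)`). -/
noncomputable def Hform (ω : Fin n → Fin n → Pt n → ℝ)
    (Γ : Fin n → Fin n → Fin n → Pt n → ℝ) (i j : Fin n) : Form n := fun a x =>
  (1 / 4 : ℝ) * ∑ s, ω i s x *
    ((covT Γ j (a 1) (a 0) s x - 2 * Rc Γ j (a 1) (a 0) s x)
      - (covT Γ j (a 0) (a 1) s x - 2 * Rc Γ j (a 0) (a 1) s x))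

/-- The `λ`-correction term `(1/2) ω^{ij} ∇_i ξ ∧ ∇_j η` of the functorial product `∧_Q`. -/
noncomputable def Qcorr (ω : Fin n → Fin n → Pt n → ℝ)
    (Γ : Fin n → Fin n → Fin n → Pt n → ℝ) (p q : ℕ) (ξ η : Form n) : Form n :=
  (2⁻¹ : ℝ) • ∑ i, ∑ j, fmul (ω i j) (wedge p q (nabla Γ i p ξ) (nabla Γ j q η))

/-- `λ`-extended forms over `ℝ[λ]/(λ²)`: a pair `(ξ₀, ξ₁)` stands for `ξ₀ + λ ξ₁`. -/
abbrev FormL (n : ℕ) := Form n × Form n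

/-- Both components are smooth `p`-forms on `U`. -/
def IsPFormL (U : Set (Pt n)) (p : ℕ) (ξ : FormL n) : Prop :=
  IsPForm U p ξ.1 ∧ IsPForm U p ξ.2

/-- The order-`λ` nonlinear correction
`(−1)^{|ξ|+1} Σ_{i,j} H^{ij} ∧ (∂_i⌟ξ) ∧ (∂_j⌟η)`. -/
noncomputable def HatCorr (ω : Fin n → Fin n → Pt n → ℝ)
    (Γ : Fin n → Fin n → Fin n → Pt n → ℝ) (p q : ℕ) (ξ η : Form n) : Form n :=
  ((-1 : ℝ) ^ (p + 1)) •
    ∑ i, ∑ j,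
      wedge (2 + (p - 1)) (q - 1)
        (wedge 2 (p - 1) (Hform ω Γ i j) (intr p i ξ)) (intr q j η)

/-- The quantum wedge product `∧₁` on `λ`-extended forms:
`ξ ∧₁ η = ξ ∧ η + (λ/2) ω^{ij} ∇_i ξ ∧ ∇_j η
  + λ (−1)^{|ξ|+1} H^{ij} ∧ (∂_i⌟ξ) ∧ (∂_j⌟η)`, extended `λ`-bilinearly. -/
noncomputable def wedge1 (ω : Fin n → Fin n → Pt n → ℝ)
    (Γ : Fin n → Fin n → Fin n → Pt n → ℝ) (p q : ℕ) (ξ η : FormL n) : FormL n :=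
  (wedge p q ξ.1 η.1,
   wedge p q ξ.1 η.2 + wedge p q ξ.2 η.1
     + Qcorr ω Γ p q ξ.1 η.1 + HatCorr ω Γ p q ξ.1 η.1)

/-- The (undeformed) exterior derivative on `λ`-extended forms. -/
noncomputable def extdL (p : ℕ) (ξ : FormL n) : FormL n := (extd p ξ.1, extd p ξ.2)

/-- The 1-form `Γ^i_{r p} dx^p` (with `i, r` fixed). -/
def GammaOne (Γ : Fin n → Fin n → Fin n → Pt n → ℝ) (i r : Fin n) : Form n :=
  fun a x => Γ i r (a 0) x

/-- Symmetry of the `H^{ij}` in `i, j` (as 2-forms on `U`). -/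
def HSymm (U : Set (Pt n)) (ω : Fin n → Fin n → Pt n → ℝ)
    (Γ : Fin n → Fin n → Fin n → Pt n → ℝ) : Prop :=
  ∀ i j a, ∀ x ∈ U, Hform ω Γ i j a x = Hform ω Γ j i a x

/-- The condition `dH^{ij} + Γ^i_{rp} dx^p ∧ H^{rj} + Γ^j_{rp} dx^p ∧ H^{ir} = 0` on `U`. -/
def HClosed (U : Set (Pt n)) (ω : Fin n → Fin n → Pt n → ℝ)
    (Γ : Fin n → Fin n → Fin n → Pt n → ℝ) : Prop :=
  ∀ i j a, ∀ x ∈ U,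
    (extd 2 (Hform ω Γ i j)
      + ∑ r, wedge 1 2 (GammaOne Γ i r) (Hform ω Γ r j)
      + ∑ r, wedge 1 2 (GammaOne Γ j r) (Hform ω Γ i r)) a x = 0

/-- Associativity of `∧₁` on `U`, on (λ-extended) homogeneous smooth forms. -/
def WedgeAssoc (U : Set (Pt n)) (ω : Fin n → Fin n → Pt n → ℝ)
    (Γ : Fin n → Fin n → Fin n → Pt n → ℝ) : Prop :=
  ∀ (p q r : ℕ) (ξ η ζ : FormL n),
    IsPFormL U p ξ → IsPFormL U q η → IsPFormL U r ζ →
    ∀ a, ∀ x ∈ U,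
      (wedge1 ω Γ (p + q) r (wedge1 ω Γ p q ξ η) ζ).1 a x
          = (wedge1 ω Γ p (q + r) ξ (wedge1 ω Γ q r η ζ)).1 a x ∧
      (wedge1 ω Γ (p + q) r (wedge1 ω Γ p q ξ η) ζ).2 a x
          = (wedge1 ω Γ p (q + r) ξ (wedge1 ω Γ q r η ζ)).2 a x

/-- The graded Leibniz rule for `d` with respect to `∧₁` on `U`. -/
def LeibnizRule (U : Set (Pt n)) (ω : Fin n → Fin n → Pt n → ℝ)
    (Γ : Fin n → Fin n → Fin n → Pt n → ℝ) : Prop :=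
  ∀ (p q : ℕ) (ξ η : FormL n),
    IsPFormL U p ξ → IsPFormL U q η →
    ∀ a, ∀ x ∈ U,
      (extdL (p + q) (wedge1 ω Γ p q ξ η)).1 a x
          = (wedge1 ω Γ (p + 1) q (extdL p ξ) η
              + ((-1 : ℝ) ^ p) • wedge1 ω Γ p (q + 1) ξ (extdL q η)).1 a x ∧
      (extdL (p + q) (wedge1 ω Γ p q ξ η)).2 a x
          = (wedge1 ω Γ (p + 1) q (extdL p ξ) η
              + ((-1 : ℝ) ^ p) • wedge1 ω Γ p (q + 1) ξ (extdL q η)).2 a x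

/-! ### Algebra in the exterior algebra -/

/-- The exterior algebra in which all computations take place. -/
abbrev Lam (n : ℕ) := ExteriorAlgebra ℝ (Fin n → ℝ)

/-- generators -/
noncomputable def ee (k : Fin n) : Lam n := ExteriorAlgebra.ι ℝ (Pi.single k (1 : ℝ))

/-- contraction -/
noncomputable def ii (m : Fin n) : Lam n →ₗ[ℝ] Lam n :=
  CliffordAlgebra.contractLeft (Q := (0 : QuadraticForm ℝ (Fin n → ℝ)))
    (LinearMap.proj m : (Fin n → ℝ) →ₗ[ℝ] ℝ)

/-- grade involution -/
noncomputable def al : Lam n →ₐ[ℝ] Lam n :=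
  CliffordAlgebra.involute (Q := (0 : QuadraticForm ℝ (Fin n → ℝ)))

theorem ee_anti (k l : Fin n) : ee k * ee l = - (ee l * ee k) :=
  eq_neg_of_add_eq_zero_left (ExteriorAlgebra.ι_add_mul_swap (R := ℝ) _ _)

theorem ii_ee_mul (m k : Fin n) (X : Lam n) :
    ii m (ee k * X) = (if m = k then X else 0) - ee k * ii m X := by
  have h := CliffordAlgebra.contractLeft_ι_mul (Q := (0 : QuadraticForm ℝ (Fin n → ℝ)))
    (d := (LinearMap.proj m : (Fin n → ℝ) →ₗ[ℝ] ℝ)) (Pi.single k (1 : ℝ)) X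
  unfold ii ee
  refine h.trans ?_
  congr 1
  simp [Pi.single_apply]

theorem ii_algebraMap (m : Fin n) (r : ℝ) : ii m (algebraMap ℝ (Lam n) r) = 0 :=
  CliffordAlgebra.contractLeft_algebraMap _ _ _

theorem al_ee (k : Fin n) : al (ee k) = - ee k :=
  CliffordAlgebra.involute_ι _

theorem lam_induction {P : Lam n → Prop}
    (h0 : ∀ r, P (algebraMap ℝ _ r)) (hadd : ∀ x y, P x → P y → P (x + y))
    (hsm : ∀ (c : ℝ) x, P x → P (c • x))
    (hm : ∀ k x, P x → P (ee k * x)) (x : Lam n) : P x := by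
  refine CliffordAlgebra.left_induction (Q := (0 : QuadraticForm ℝ (Fin n → ℝ))) (P := P)
    h0 hadd ?_ x
  intro x m hx
  have : (CliffordAlgebra.ι (0 : QuadraticForm ℝ (Fin n → ℝ)) m)
      = ∑ k, m k • ee k := by
    unfold ee
    simp_rw [← map_smul, ← map_sum]
    change _ = (CliffordAlgebra.ι (0 : QuadraticForm ℝ (Fin n → ℝ))) _
    congr 1
    ext j
    simp [Finset.sum_apply, Pi.single_apply]
  rw [this, Finset.sum_mul]
  have hz : P 0 := by simpa using h0 0
  refine Finset.sum_induction _ P hadd hz ?_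
  intro k _
  rw [smul_mul_assoc]
  exact hsm _ _ (hm _ _ hx)

theorem ee_mul (k : Fin n) (X : Lam n) : ee k * X = al X * ee k := by
  induction X using lam_induction with
  | h0 r => rw [AlgHom.commutes]; exact (Algebra.commutes r _).symm
  | hadd x y hx hy => rw [mul_add, hx, hy, map_add, add_mul]
  | hsm c x hx => rw [mul_smul_comm, hx, map_smul, smul_mul_assoc]
  | hm l x hx => rw [map_mul, al_ee, ← mul_assoc, ee_anti, neg_mul, mul_assoc, hx]; noncomm_ring

theorem al_ii (m : Fin n) (X : Lam n) : al (ii m X) = - ii m (al X) := by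
  induction X using lam_induction with
  | h0 r => rw [AlgHom.commutes, ii_algebraMap]; simp
  | hadd x y hx hy => simp only [map_add, hx, hy]; abel
  | hsm c x hx => simp only [map_smul, hx, smul_neg]
  | hm l x hx =>
    simp only [map_mul, al_ee, ii_ee_mul, map_sub, hx, neg_mul, map_neg, mul_neg]
    split_ifs <;> simp

theorem ii_mul (m : Fin n) (X Y : Lam n) : ii m (X * Y) = ii m X * Y + al X * ii m Y := by
  induction X using lam_induction with
  | h0 r => rw [AlgHom.commutes, ii_algebraMap]; simp [← Algebra.smul_def]
  | hadd x y hx hy => simp only [map_add, add_mul, hx, hy]; abel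
  | hsm c x hx => simp only [map_smul, smul_mul_assoc, hx, smul_add]
  | hm l x hx =>
    simp only [map_mul, al_ee, mul_assoc, ii_ee_mul, hx]
    split_ifs <;> noncomm_ring

theorem algebraMap_inj' {r s : ℝ} (h : algebraMap ℝ (Lam n) r = algebraMap ℝ (Lam n) s) :
    r = s := (ExteriorAlgebra.algebraMap_leftInverse (R := ℝ) (Fin n → ℝ)).injective h

/-! ### Recursive symbol map -/

/-- insertion of an index in the first slot -/
def cns (m : Fin n) (a : ℕ → Fin n) : ℕ → Fin n := fun t => if t = 0 then m else a (t - 1)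

/-- contraction on coefficient families (positive degree) -/
def In (m : Fin n) (ξ : Form n) : Form n := fun a x => ξ (cns m a) x

theorem intr_succ (p : ℕ) (m : Fin n) (ξ : Form n) : intr (p + 1) m ξ = In m ξ := rfl

/-- The exterior algebra element of a coefficient family. -/
noncomputable def Ph (c : Fin n) (x : Pt n) : ℕ → Form n → Lam n
  | 0, ξ => algebraMap ℝ _ (ξ (fun _ => c) x)
  | p + 1, ξ => ((p : ℝ) + 1)⁻¹ • ∑ m, ee m * Ph c x p (In m ξ)

/-- recursive antisymmetry -/
def RA : ℕ → Form n → Prop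
  | 0, _ => True
  | 1, _ => True
  | p + 2, ξ => (∀ m, RA (p + 1) (In m ξ)) ∧ ∀ m k, In m (In k ξ) = - In k (In m ξ)

/-- good coefficient families -/
def Good (p : ℕ) (ξ : Form n) : Prop := DependsOn p ξ ∧ RA p ξ

theorem In_add (m : Fin n) (ξ η : Form n) : In m (ξ + η) = In m ξ + In m η := rfl
theorem In_sub (m : Fin n) (ξ η : Form n) : In m (ξ - η) = In m ξ - In m η := rfl
theorem In_neg (m : Fin n) (ξ : Form n) : In m (-ξ) = - In m ξ := rfl
theorem In_smul (m : Fin n) (r : ℝ) (ξ : Form n) : In m (r • ξ) = r • In m ξ := rfl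
theorem In_zero (m : Fin n) : In m (0 : Form n) = 0 := rfl
theorem In_fmul (m : Fin n) (f : Pt n → ℝ) (ξ : Form n) : In m (fmul f ξ) = fmul f (In m ξ) := rfl

theorem Ph_congr (c : Fin n) {x : Pt n} (p : ℕ) {ξ η : Form n} (h : ∀ a, ξ a x = η a x) :
    Ph c x p ξ = Ph c x p η := by
  induction p generalizing ξ η with
  | zero => simp [Ph, h]
  | succ p ih =>
    simp only [Ph]
    congr 1
    refine Finset.sum_congr rfl fun m _ => ?_
    rw [ih (η := In m η)]
    intro a
    exact h _

theorem Ph_add (c : Fin n) (x : Pt n) (p : ℕ) (ξ η : Form n) :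
    Ph c x p (ξ + η) = Ph c x p ξ + Ph c x p η := by
  induction p generalizing ξ η with
  | zero => simp [Ph]
  | succ p ih => simp only [Ph, In_add, ih, mul_add, Finset.sum_add_distrib, smul_add]

theorem Ph_smul (c : Fin n) (x : Pt n) (p : ℕ) (r : ℝ) (ξ : Form n) :
    Ph c x p (r • ξ) = r • Ph c x p ξ := by
  induction p generalizing ξ with
  | zero => simp [Ph, Algebra.smul_def]
  | succ p ih =>
    simp only [Ph, In_smul, ih, mul_smul_comm, ← Finset.smul_sum]
    rw [smul_comm]

theorem Ph_fmul (c : Fin n) (x : Pt n) (p : ℕ) (f : Pt n → ℝ) (ξ : Form n) :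
    Ph c x p (fmul f ξ) = f x • Ph c x p ξ := by
  rw [← Ph_smul]
  exact Ph_congr c p fun a => rfl

theorem Ph_zero (c : Fin n) (x : Pt n) (p : ℕ) : Ph c x p (0 : Form n) = 0 := by
  have := Ph_smul c x p 0 (0 : Form n)
  simpa using this

theorem Ph_neg (c : Fin n) (x : Pt n) (p : ℕ) (ξ : Form n) : Ph c x p (-ξ) = - Ph c x p ξ := by
  have := Ph_smul c x p (-1) ξ
  simpa using this

theorem Ph_sub (c : Fin n) (x : Pt n) (p : ℕ) (ξ η : Form n) :
    Ph c x p (ξ - η) = Ph c x p ξ - Ph c x p η := by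
  rw [sub_eq_add_neg, Ph_add, Ph_neg, sub_eq_add_neg]

theorem Ph_sum (c : Fin n) (x : Pt n) (p : ℕ) {ι : Type*} (s : Finset ι) (f : ι → Form n) :
    Ph c x p (∑ i ∈ s, f i) = ∑ i ∈ s, Ph c x p (f i) := by
  classical
  induction s using Finset.induction_on with
  | empty => simp [Ph_zero]
  | insert i s hi ih => rw [Finset.sum_insert hi, Finset.sum_insert hi, Ph_add, ih]

theorem RA_In {p : ℕ} {ξ : Form n} (h : RA (p + 1) ξ) (m : Fin n) : RA p (In m ξ) := by
  cases p with
  | zero => trivial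
  | succ p => exact h.1 m

theorem Dep_In {p : ℕ} {ξ : Form n} (h : DependsOn (p + 1) ξ) (m : Fin n) :
    DependsOn p (In m ξ) := by
  intro a b hab
  refine h _ _ ?_
  intro t ht
  unfold cns
  split_ifs with h0
  · rfl
  · exact hab _ (by omega)

theorem Good_In {p : ℕ} {ξ : Form n} (h : Good (p + 1) ξ) (m : Fin n) : Good p (In m ξ) :=
  ⟨Dep_In h.1 m, RA_In h.2 m⟩

/-- Euler identity -/
theorem Ph_succ (c : Fin n) (x : Pt n) (p : ℕ) (ξ : Form n) :
    ∑ m, ee m * Ph c x p (In m ξ) = ((p : ℝ) + 1) • Ph c x (p + 1) ξ := by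
  simp only [Ph]
  rw [smul_smul, mul_inv_cancel₀ (by positivity), one_smul]

theorem ii_Ph_zero (c : Fin n) (x : Pt n) (m : Fin n) (ξ : Form n) : ii m (Ph c x 0 ξ) = 0 :=
  ii_algebraMap _ _

theorem ii_Ph (c : Fin n) (x : Pt n) (p : ℕ) (m : Fin n) (ξ : Form n) (h : RA (p + 1) ξ) :
    ii m (Ph c x (p + 1) ξ) = Ph c x p (In m ξ) := by
  induction p generalizing ξ m with
  | zero =>
    simp only [Ph, map_smul, map_sum, ii_ee_mul, ii_algebraMap]
    simp
  | succ p ih =>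
    have h1 : ∀ k, ii m (Ph c x (p + 1) (In k ξ)) = - Ph c x p (In k (In m ξ)) := by
      intro k
      rw [ih _ _ (h.1 k), h.2 m k, Ph_neg]
    have h2 : (((p + 1 : ℕ) : ℝ) + 1) • ii m (Ph c x (p + 1 + 1) ξ)
        = (((p + 1 : ℕ) : ℝ) + 1) • Ph c x (p + 1) (In m ξ) := by
      rw [← map_smul, ← Ph_succ, map_sum]
      simp only [ii_ee_mul, h1, mul_neg, sub_neg_eq_add, Finset.sum_add_distrib]
      rw [Ph_succ]
      simp [add_smul, add_comm]
    exact smul_right_injective _ (by positivity : (((p + 1 : ℕ) : ℝ) + 1) ≠ 0) h2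

theorem al_Ph (c : Fin n) (x : Pt n) (p : ℕ) (ξ : Form n) :
    al (Ph c x p ξ) = (-1 : ℝ) ^ p • Ph c x p ξ := by
  induction p generalizing ξ with
  | zero => simp [Ph]
  | succ p ih =>
    simp only [Ph, map_smul, map_sum, map_mul, al_ee, ih, pow_succ]
    simp only [mul_smul_comm, ← Finset.smul_sum, neg_mul, Finset.sum_neg_distrib]
    simp only [smul_neg, mul_neg, mul_one, neg_smul]
    rw [smul_comm]

/-- Extraction of coefficients. -/
theorem Ph_inj (c : Fin n) (x : Pt n) (p : ℕ) {ξ η : Form n} (hξ : Good p ξ) (hη : Good p η)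
    (h : Ph c x p ξ = Ph c x p η) (a : ℕ → Fin n) : ξ a x = η a x := by
  induction p generalizing ξ η a with
  | zero =>
    have h1 := algebraMap_inj' h
    rw [hξ.1 a (fun _ => c) (by simp), hη.1 a (fun _ => c) (by simp)]
    exact h1
  | succ p ih =>
    have h1 := congrArg (ii (a 0)) h
    rw [ii_Ph _ _ _ _ _ hξ.2, ii_Ph _ _ _ _ _ hη.2] at h1
    have h2 := ih (Good_In hξ _) (Good_In hη _) h1 (fun t => a (t + 1))
    have h3 : cns (a 0) (fun t => a (t + 1)) = a := by
      funext t
      unfold cns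
      split_ifs with h0
      · rw [h0]
      · show a (t - 1 + 1) = a t
        congr 1; omega
    unfold In at h2
    rwa [h3] at h2

/-! ### Wedge product and the symbol map -/

/-- extension of a finite index tuple -/
def ext' {p : ℕ} (b : Fin p → Fin n) (c : Fin n) : ℕ → Fin n :=
  fun t => if h : t < p then b ⟨t, h⟩ else c

theorem cns_ext' {p : ℕ} (m : Fin n) (b : Fin p → Fin n) (c : Fin n) :
    cns m (ext' b c) = ext' (Fin.cons m b : Fin (p + 1) → Fin n) c := by
  funext t
  unfold cns ext'
  rcases t with _ | t
  · simp
  · by_cases h : t < p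
    · have h' : t + 1 < p + 1 := by omega
      have h2 : (⟨t + 1, h'⟩ : Fin (p + 1)) = Fin.succ ⟨t, h⟩ := rfl
      simp only [h', h, dif_pos, h2, Fin.cons_succ]
      simp [h]
    · simp [h]

/-- monomials -/
noncomputable def mon {p : ℕ} (b : Fin p → Fin n) : Lam n :=
  ExteriorAlgebra.ιMulti ℝ p (fun t => (Pi.single (b t) (1 : ℝ) : Fin n → ℝ))

theorem mon_cons {p : ℕ} (m : Fin n) (b : Fin p → Fin n) :
    mon (Fin.cons m b : Fin (p + 1) → Fin n) = ee m * mon b := by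
  unfold mon ee
  rw [ExteriorAlgebra.ιMulti_succ_apply]
  rfl

theorem mon_append {p q : ℕ} (b : Fin p → Fin n) (b' : Fin q → Fin n) :
    mon (Fin.append b b') = mon b * mon b' := by
  unfold mon
  simp only [ExteriorAlgebra.ιMulti_apply]
  rw [← List.prod_append, ← List.ofFn_fin_append]
  congr 2
  funext t
  refine Fin.addCases (fun i => ?_) (fun i => ?_) t <;> simp

theorem mon_perm {p : ℕ} (b : Fin p → Fin n) (σ : Equiv.Perm (Fin p)) :
    mon (b ∘ σ) = ((Equiv.Perm.sign σ : ℤ) : ℝ) • mon b := by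
  unfold mon
  have := (ExteriorAlgebra.ιMulti ℝ p (M := Fin n → ℝ)).map_perm
    (fun t => (Pi.single (b t) (1 : ℝ) : Fin n → ℝ)) σ
  refine Eq.trans ?_ (this.trans ?_)
  · rfl
  · rw [Units.smul_def, Int.cast_smul_eq_zsmul]

theorem Ph_eq_sum (c : Fin n) (x : Pt n) (p : ℕ) (ξ : Form n) :
    Ph c x p ξ = ((p.factorial : ℝ)⁻¹) • ∑ b : Fin p → Fin n, ξ (ext' b c) x • mon b := by
  induction p generalizing ξ with
  | zero =>
    have : ∀ b : Fin 0 → Fin n, ext' b c = fun _ => c := by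
      intro b; funext t; simp [ext']
    simp [Ph, this, mon, Algebra.algebraMap_eq_smul_one]
  | succ p ih =>
    rw [← (Fin.consEquiv (fun _ : Fin (p + 1) => Fin n)).sum_comp, Fintype.sum_prod_type]
    simp only [Ph, ih]
    simp only [mul_smul_comm, ← Finset.smul_sum, smul_smul]
    congr 1
    · rw [Nat.factorial_succ]; push_cast; rw [mul_inv]
    · refine Finset.sum_congr rfl fun m _ => ?_
      rw [Finset.mul_sum]
      refine Finset.sum_congr rfl fun b _ => ?_
      simp only [Fin.consEquiv, Equiv.coe_fn_mk]
      rw [mon_cons, mul_smul_comm]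
      congr 1
      unfold In
      rw [cns_ext']

theorem Ph_wedge (c : Fin n) (x : Pt n) (p q : ℕ) {ξ η : Form n}
    (hξ : DependsOn p ξ) (hη : DependsOn q η) :
    Ph c x (p + q) (wedge p q ξ η) = Ph c x p ξ * Ph c x q η := by
  have key : ∀ b : Fin (p + q) → Fin n,
      wedge p q ξ η (ext' b c) x = ((p.factorial * q.factorial : ℕ) : ℝ)⁻¹ *
        ∑ σ : Equiv.Perm (Fin (p + q)), ((Equiv.Perm.sign σ : ℤ) : ℝ) *
          (ξ (ext' ((b ∘ σ) ∘ Fin.castAdd q) c) x * η (ext' ((b ∘ σ) ∘ Fin.natAdd p) c) x) := by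
    intro b
    unfold wedge
    congr 1
    refine Finset.sum_congr rfl fun σ _ => ?_
    rw [mul_assoc]
    congr 2
    · refine congrFun (hξ _ _ ?_) x
      intro t ht
      simp [ext', ht, Fin.castAdd, Fin.castLE]
    · refine congrFun (hη _ _ ?_) x
      intro t ht
      simp [ext', ht, Fin.natAdd]
  rw [Ph_eq_sum, Ph_eq_sum, Ph_eq_sum]
  have h1 : ∑ b : Fin (p + q) → Fin n, wedge p q ξ η (ext' b c) x • mon b
      = ((p.factorial * q.factorial : ℕ) : ℝ)⁻¹ • (((p + q).factorial : ℝ) •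
        ∑ b : Fin (p + q) → Fin n,
          (ξ (ext' (b ∘ Fin.castAdd q) c) x * η (ext' (b ∘ Fin.natAdd p) c) x) • mon b) := by
    simp only [key, mul_smul, Finset.sum_smul]
    rw [← Finset.smul_sum, Finset.sum_comm]
    congr 1
    have h2 : ∀ σ : Equiv.Perm (Fin (p + q)),
        ∑ b : Fin (p + q) → Fin n, ((Equiv.Perm.sign σ : ℤ) : ℝ) •
          ξ (ext' ((b ∘ σ) ∘ Fin.castAdd q) c) x • η (ext' ((b ∘ σ) ∘ Fin.natAdd p) c) x • mon b
        = ∑ b : Fin (p + q) → Fin n,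
          ξ (ext' (b ∘ Fin.castAdd q) c) x • η (ext' (b ∘ Fin.natAdd p) c) x • mon b := by
      intro σ
      symm
      rw [← (Equiv.arrowCongr σ (Equiv.refl (Fin n))).symm.sum_comp]
      refine Finset.sum_congr rfl fun b _ => ?_
      have h3 : ((Equiv.arrowCongr σ (Equiv.refl (Fin n))).symm b) = b ∘ σ := by
        funext t; simp [Equiv.arrowCongr]
      rw [h3, mon_perm]
      rw [smul_comm (η _ x), smul_comm (ξ _ x)]
    rw [Finset.sum_congr rfl fun σ _ => h2 σ]
    rw [Finset.sum_const, Finset.card_univ, Fintype.card_perm, Fintype.card_fin,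
      Nat.cast_smul_eq_nsmul]
  rw [h1, smul_mul_smul_comm, smul_smul, smul_smul, ]
  congr 1
  · push_cast
    have := Nat.factorial_ne_zero (p + q)
    have := Nat.factorial_ne_zero p
    have := Nat.factorial_ne_zero q
    field_simp
  · rw [← (Fin.appendEquiv p q).sum_comp, Fintype.sum_prod_type, Finset.sum_mul_sum]
    refine Finset.sum_congr rfl fun b _ => Finset.sum_congr rfl fun b' _ => ?_
    have e1 : (Fin.appendEquiv p q (b, b')) ∘ Fin.castAdd q = b := by
      funext t; simp [Fin.appendEquiv]
    have e2 : (Fin.appendEquiv p q (b, b')) ∘ Fin.natAdd p = b' := by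
      funext t; simp [Fin.appendEquiv]
    rw [e1, e2, smul_mul_smul_comm, ← mon_append]
    rfl

theorem Dep_wedge (p q : ℕ) {ξ η : Form n}
    (hξ : DependsOn p ξ) (hη : DependsOn q η) : DependsOn (p + q) (wedge p q ξ η) := by
  intro a b hab
  funext x
  unfold wedge
  congr 1
  refine Finset.sum_congr rfl fun σ _ => ?_
  refine congrArg₂ (· * ·) (congrArg (_ * ·) ?_) ?_
  · refine congrFun (hξ _ _ ?_) x
    intro t ht
    simp only [ht, dif_pos]
    exact hab _ (Fin.is_lt _)
  · refine congrFun (hη _ _ ?_) x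
    intro t ht
    simp only [ht, dif_pos]
    exact hab _ (Fin.is_lt _)

theorem Anti_wedge (p q : ℕ) {ξ η : Form n}
    (hξ : DependsOn p ξ) (hη : DependsOn q η) : IsAnti (p + q) (wedge p q ξ η) := by
  intro a i j hi hj hij x
  unfold wedge
  rw [← mul_neg, ← Finset.sum_neg_distrib]
  congr 1
  rw [← Equiv.sum_comp (Equiv.mulLeft (Equiv.swap (⟨i, hi⟩ : Fin (p + q)) ⟨j, hj⟩))]
  refine Finset.sum_congr rfl fun σ _ => ?_
  have hne : (⟨i, hi⟩ : Fin (p + q)) ≠ ⟨j, hj⟩ := by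
    intro h; exact hij (by simpa using h)
  have hv : ∀ s : Fin (p + q),
      Equiv.swap i j (((Equiv.swap (⟨i, hi⟩ : Fin (p + q)) ⟨j, hj⟩) s : Fin (p + q)) : ℕ)
        = (s : ℕ) := by
    intro s
    have := (Fin.val_injective (n := p + q)).swap_apply ⟨i, hi⟩ ⟨j, hj⟩
      ((Equiv.swap (⟨i, hi⟩ : Fin (p + q)) ⟨j, hj⟩) s)
    simpa using this
  have e1 : ξ (fun t => (fun t => if h : t < p then a (Equiv.swap i j
        (((Equiv.mulLeft (Equiv.swap (⟨i, hi⟩ : Fin (p + q)) ⟨j, hj⟩)) σ ⟨t, by omega⟩ :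
          Fin (p + q)) : ℕ)) else a (Equiv.swap i j t)) t) x
      = ξ (fun t => if h : t < p then a ((σ ⟨t, by omega⟩ : Fin (p + q)) : ℕ) else a t) x := by
    refine congrFun (hξ _ _ ?_) x
    intro t ht
    simp only [ht, dif_pos, Equiv.coe_mulLeft, Equiv.Perm.mul_apply, hv]
  have e2 : η (fun t => (fun t => if h : t < q then a (Equiv.swap i j
        (((Equiv.mulLeft (Equiv.swap (⟨i, hi⟩ : Fin (p + q)) ⟨j, hj⟩)) σ ⟨p + t, by omega⟩ :
          Fin (p + q)) : ℕ)) else a (Equiv.swap i j t)) t) x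
      = η (fun t => if h : t < q then a ((σ ⟨p + t, by omega⟩ : Fin (p + q)) : ℕ) else a t) x := by
    refine congrFun (hη _ _ ?_) x
    intro t ht
    simp only [ht, dif_pos, Equiv.coe_mulLeft, Equiv.Perm.mul_apply, hv]
  rw [e1, e2]
  simp only [Equiv.coe_mulLeft, Equiv.Perm.sign_mul, Equiv.Perm.sign_swap hne]
  simp

theorem Anti_In {p : ℕ} {ξ : Form n} (h : IsAnti (p + 1) ξ) (m : Fin n) : IsAnti p (In m ξ) := by
  intro a i j hi hj hij x
  have := h (cns m a) (i + 1) (j + 1) (by omega) (by omega) (by omega) x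
  unfold In
  rw [← this]
  congr 1
  funext t
  unfold cns
  rcases t with _ | t
  · rw [Equiv.swap_apply_of_ne_of_ne (by omega) (by omega)]; simp
  · have h2 := (add_left_injective 1 : Function.Injective (fun t : ℕ => t + 1)).swap_apply i j t
    rw [h2]
    simp

theorem RA_of_Anti {p : ℕ} {ξ : Form n} (h : IsAnti p ξ) : RA p ξ := by
  induction p generalizing ξ with
  | zero => trivial
  | succ p ih =>
    rcases p with _ | p
    · trivial
    · refine ⟨fun m => ih (Anti_In h m), fun m k => ?_⟩
      funext a x
      have := h (cns m (cns k a)) 0 1 (by omega) (by omega) (by omega) x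
      show ξ (cns k (cns m a)) x = - ξ (cns m (cns k a)) x
      rw [← this]
      congr 1
      funext t
      rcases t with _ | _ | t
      · simp [cns]
      · simp [cns]
      · rw [Equiv.swap_apply_of_ne_of_ne (by omega) (by omega)]; simp [cns]

theorem Good_of_IsPForm {U : Set (Pt n)} {p : ℕ} {ξ : Form n} (h : IsPForm U p ξ) : Good p ξ :=
  ⟨h.1, RA_of_Anti h.2.1⟩

theorem Good_wedge (p q : ℕ) {ξ η : Form n}
    (hξ : DependsOn p ξ) (hη : DependsOn q η) : Good (p + q) (wedge p q ξ η) :=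
  ⟨Dep_wedge p q hξ hη, RA_of_Anti (Anti_wedge p q hξ hη)⟩

/-! ### Closure properties of good families -/

theorem RA_add {p : ℕ} {ξ η : Form n} (h : RA p ξ) (h' : RA p η) : RA p (ξ + η) := by
  induction p generalizing ξ η with
  | zero => trivial
  | succ p ih =>
    rcases p with _ | p
    · trivial
    · refine ⟨fun m => ?_, fun m k => ?_⟩
      · rw [In_add]; exact ih (h.1 m) (h'.1 m)
      · simp only [In_add]; rw [h.2, h'.2]; abel

theorem RA_fmul {p : ℕ} (f : Pt n → ℝ) {ξ : Form n} (h : RA p ξ) : RA p (fmul f ξ) := by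
  induction p generalizing ξ with
  | zero => trivial
  | succ p ih =>
    rcases p with _ | p
    · trivial
    · refine ⟨fun m => ?_, fun m k => ?_⟩
      · rw [In_fmul]; exact ih (h.1 m)
      · simp only [In_fmul]; rw [h.2]; funext a x; simp [fmul]

theorem Good_add {p : ℕ} {ξ η : Form n} (h : Good p ξ) (h' : Good p η) : Good p (ξ + η) := by
  refine ⟨fun a b hab => ?_, RA_add h.2 h'.2⟩
  show ξ a + η a = ξ b + η b
  rw [h.1 a b hab, h'.1 a b hab]

theorem Good_fmul {p : ℕ} (f : Pt n → ℝ) {ξ : Form n} (h : Good p ξ) : Good p (fmul f ξ) := by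
  refine ⟨fun a b hab => ?_, RA_fmul f h.2⟩
  funext x
  show f x * ξ a x = f x * ξ b x
  rw [h.1 a b hab]

theorem Good_smul {p : ℕ} (r : ℝ) {ξ : Form n} (h : Good p ξ) : Good p (r • ξ) :=
  Good_fmul (fun _ => r) h

theorem Good_neg {p : ℕ} {ξ : Form n} (h : Good p ξ) : Good p (-ξ) := by
  have := Good_smul (-1) h
  simpa using this

theorem Good_sub {p : ℕ} {ξ η : Form n} (h : Good p ξ) (h' : Good p η) : Good p (ξ - η) := by
  rw [sub_eq_add_neg]; exact Good_add h (Good_neg h')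

theorem RA_zero (p : ℕ) : RA p (0 : Form n) := by
  induction p with
  | zero => trivial
  | succ p ih =>
    rcases p with _ | p
    · trivial
    · exact ⟨fun m => ih, fun m k => by simp [In_zero]⟩

theorem Good_zero (p : ℕ) : Good p (0 : Form n) :=
  ⟨fun _ _ _ => rfl, RA_zero p⟩

theorem Good_sum {p : ℕ} {ι : Type*} (s : Finset ι) {f : ι → Form n} (h : ∀ i, Good p (f i)) :
    Good p (∑ i ∈ s, f i) :=
  Finset.sum_induction _ (Good p) (fun _ _ => Good_add) (Good_zero p) fun i _ => h i

/-- coefficientwise partial derivative -/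
noncomputable def pdF (i : Fin n) (ξ : Form n) : Form n := fun a x => pd i (ξ a) x

theorem In_pdF (m i : Fin n) (ξ : Form n) : In m (pdF i ξ) = pdF i (In m ξ) := rfl

theorem pdF_neg (i : Fin n) (ξ : Form n) : pdF i (-ξ) = - pdF i ξ := by
  funext a x
  show fderiv ℝ (-(ξ a)) x _ = -(fderiv ℝ (ξ a) x _)
  rw [fderiv_neg]; rfl

theorem RA_pdF {p : ℕ} (i : Fin n) {ξ : Form n} (h : RA p ξ) : RA p (pdF i ξ) := by
  induction p generalizing ξ with
  | zero => trivial
  | succ p ih =>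
    rcases p with _ | p
    · trivial
    · refine ⟨fun m => ?_, fun m k => ?_⟩
      · rw [In_pdF]; exact ih (h.1 m)
      · simp only [In_pdF]; rw [h.2, pdF_neg]

theorem Dep_pdF {p : ℕ} (i : Fin n) {ξ : Form n} (h : DependsOn p ξ) : DependsOn p (pdF i ξ) := by
  intro a b hab
  funext x
  unfold pdF
  rw [h a b hab]

theorem Good_pdF {p : ℕ} (i : Fin n) {ξ : Form n} (h : Good p ξ) : Good p (pdF i ξ) :=
  ⟨Dep_pdF i h.1, RA_pdF i h.2⟩

theorem In_extd (p : ℕ) (m : Fin n) (ξ : Form n) :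
    In m (extd (p + 1) ξ) = pdF m ξ - extd p (In m ξ) := by
  funext a x
  show extd (p + 1) ξ (cns m a) x = pdF m ξ a x - extd p (In m ξ) a x
  unfold extd
  rw [Fin.sum_univ_succ, sub_eq_add_neg, ← Finset.sum_neg_distrib]
  congr 1
  · simp [cns, pdF]
  · refine Finset.sum_congr rfl fun k _ => ?_
    have : (ξ fun t => if t < ((k.succ : Fin (p + 1 + 1)) : ℕ) then cns m a t else cns m a (t + 1))
        = In m ξ (fun t => if t < (k : ℕ) then a t else a (t + 1)) := by
      funext y
      unfold In
      congr 1
      funext t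
      unfold cns
      rcases t with _ | t
      · simp
      · simp
    rw [this]
    simp [cns, pow_succ]

theorem In_extd_zero (m : Fin n) (ξ : Form n) (h : DependsOn 0 ξ) :
    In m (extd 0 ξ) = pdF m ξ := by
  funext a x
  show extd 0 ξ (cns m a) x = pdF m ξ a x
  unfold extd pdF
  simp [cns]

theorem extd_neg (p : ℕ) (ξ : Form n) : extd p (-ξ) = - extd p ξ := by
  funext a x
  show extd p (-ξ) a x = -(extd p ξ a x)
  unfold extd
  rw [← Finset.sum_neg_distrib]
  refine Finset.sum_congr rfl fun k _ => ?_
  rw [← mul_neg]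
  congr 1
  exact congrFun (congrFun (pdF_neg (a k) ξ) _) x

theorem RA_extd {p : ℕ} {ξ : Form n} (h : RA p ξ) : RA (p + 1) (extd p ξ) := by
  induction p generalizing ξ with
  | zero => trivial
  | succ p ih =>
    refine ⟨fun m => ?_, fun m k => ?_⟩
    · rw [In_extd, sub_eq_add_neg, ← extd_neg]
      refine RA_add (RA_pdF _ h) (ih ?_)
      have := RA_fmul (fun _ => -1) (RA_In h m)
      convert this using 1
      funext a x; simp [fmul]
    · rw [In_extd, In_extd, In_sub, In_sub, In_pdF, In_pdF]
      rcases p with _ | p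
      · have h0 : ∀ m k : Fin n, In k (extd 0 (In m ξ)) = pdF k (In m ξ) := by
          intro m k; funext a x
          show extd 0 (In m ξ) (cns k a) x = pdF k (In m ξ) a x
          unfold extd pdF
          simp [cns]
        rw [h0, h0]; abel
      · rw [In_extd, In_extd, h.2 m k, extd_neg]; abel

theorem Good_extd {p : ℕ} {ξ : Form n} (h : Good p ξ) : Good (p + 1) (extd p ξ) := by
  refine ⟨fun a b hab => ?_, RA_extd h.2⟩
  funext x
  unfold extd
  refine Finset.sum_congr rfl fun k _ => ?_
  rw [hab k k.2, h.1 _ (fun t => if t < (k : ℕ) then b t else b (t + 1))]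
  intro t ht
  split_ifs
  · exact hab _ (by omega)
  · exact hab _ (by omega)

/-- Symbol of the exterior derivative. -/
theorem Ph_extd (c : Fin n) (x : Pt n) (p : ℕ) (ξ : Form n) (h : DependsOn p ξ) :
    Ph c x (p + 1) (extd p ξ) = ∑ i, ee i * Ph c x p (pdF i ξ) := by
  induction p generalizing ξ with
  | zero =>
    conv_lhs => unfold Ph
    simp only [In_extd_zero _ _ h]
    simp
  | succ p ih =>
    have h1 : ∀ m, Ph c x (p + 1) (extd p (In m ξ))
        = ∑ i, ee i * Ph c x p (In m (pdF i ξ)) := by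
      intro m
      rw [ih _ (Dep_In h m)]
      rfl
    have h2 : (((p + 1 : ℕ) : ℝ) + 1) • Ph c x (p + 1 + 1) (extd (p + 1) ξ)
        = (((p + 1 : ℕ) : ℝ) + 1) • ∑ i, ee i * Ph c x (p + 1) (pdF i ξ) := by
      rw [← Ph_succ]
      simp only [In_extd, Ph_sub, h1, mul_sub, Finset.sum_sub_distrib, Finset.mul_sum]
      rw [Finset.sum_comm (s := Finset.univ)
        (f := fun m i => ee m * (ee i * Ph c x p (In m (pdF i ξ))))]
      simp only [← mul_assoc]
      have h3 : ∀ i m : Fin n, ee m * ee i * Ph c x p (In m (pdF i ξ))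
          = - (ee i * (ee m * Ph c x p (In m (pdF i ξ)))) := by
        intro i m; rw [ee_anti]; noncomm_ring
      simp only [h3, Finset.sum_neg_distrib, ← Finset.mul_sum, Ph_succ]
      simp only [mul_smul_comm, ← Finset.smul_sum]
      push_cast
      simp only [add_smul, one_smul]
      abel
    exact smul_right_injective _ (by positivity : (((p + 1 : ℕ) : ℝ) + 1) ≠ 0) h2

/-! ### The zeroth order part of the covariant derivative -/

/-- `Σ_k Σ_m g^m_{a_k} ξ_{⋯m⋯}` -/
def SS (g : Fin n → Fin n → Pt n → ℝ) (p : ℕ) (ξ : Form n) : Form n := fun a x =>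
  ∑ k : Fin p, ∑ m, g m (a (k : ℕ)) x * ξ (fun t => if t = (k : ℕ) then m else a t) x

theorem nabla_eq (Γ : Fin n → Fin n → Fin n → Pt n → ℝ) (i : Fin n) (p : ℕ) (ξ : Form n) :
    nabla Γ i p ξ = pdF i ξ - SS (fun m k => Γ m i k) p ξ := rfl

theorem In_SS (g : Fin n → Fin n → Pt n → ℝ) (p : ℕ) (b : Fin n) (ξ : Form n) :
    In b (SS g (p + 1) ξ) = (∑ m, fmul (g m b) (In m ξ)) + SS g p (In b ξ) := by
  funext a x
  show SS g (p + 1) ξ (cns b a) x = (∑ m, fmul (g m b) (In m ξ)) a x + SS g p (In b ξ) a x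
  unfold SS
  rw [Fin.sum_univ_succ]
  congr 1
  · simp only [Finset.sum_apply]
    refine Finset.sum_congr rfl fun m _ => ?_
    show _ = g m b x * ξ (cns m a) x
    congr 2
    funext t
    rcases t with _ | t <;> simp [cns]
  · refine Finset.sum_congr rfl fun k _ => Finset.sum_congr rfl fun m _ => ?_
    congr 1
    unfold In
    congr 1
    funext t
    rcases t with _ | t <;> simp [cns]

theorem SS_zero (g : Fin n → Fin n → Pt n → ℝ) (ξ : Form n) : SS g 0 ξ = 0 := by
  funext a x; simp [SS]

theorem SS_neg (g : Fin n → Fin n → Pt n → ℝ) (p : ℕ) (ξ : Form n) :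
    SS g p (-ξ) = - SS g p ξ := by
  funext a x; simp [SS]

theorem In_sum (m : Fin n) {ι : Type*} (s : Finset ι) (f : ι → Form n) :
    In m (∑ i ∈ s, f i) = ∑ i ∈ s, In m (f i) := by
  funext a x
  simp [In, Finset.sum_apply]

theorem RA_sum {p : ℕ} {ι : Type*} (s : Finset ι) {f : ι → Form n} (h : ∀ i, RA p (f i)) :
    RA p (∑ i ∈ s, f i) :=
  Finset.sum_induction _ (RA p) (fun _ _ => RA_add) (RA_zero p) fun i _ => h i

theorem RA_SS (g : Fin n → Fin n → Pt n → ℝ) {p : ℕ} {ξ : Form n} (h : RA p ξ) :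
    RA p (SS g p ξ) := by
  induction p generalizing ξ with
  | zero => trivial
  | succ p ih =>
    rcases p with _ | p
    · trivial
    · refine ⟨fun m => ?_, fun m k => ?_⟩
      · rw [In_SS]
        exact RA_add (RA_sum _ fun k => RA_fmul _ (h.1 k)) (ih (h.1 m))
      · simp only [In_SS, In_add, In_sum, In_fmul]
        rw [h.2 m k, SS_neg]
        have : ∀ l, fmul (g l k) (In m (In l ξ)) = - fmul (g l k) (In l (In m ξ)) := by
          intro l; rw [h.2 m l]; funext a x; simp [fmul]
        have h' : ∀ l, fmul (g l m) (In k (In l ξ)) = - fmul (g l m) (In l (In k ξ)) := by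
          intro l; rw [h.2 k l]; funext a x; simp [fmul]
        simp only [this, h', Finset.sum_neg_distrib]
        abel

theorem Good_SS (g : Fin n → Fin n → Pt n → ℝ) {p : ℕ} {ξ : Form n} (h : Good p ξ) :
    Good p (SS g p ξ) := by
  refine ⟨fun a b hab => ?_, RA_SS g h.2⟩
  funext x
  unfold SS
  refine Finset.sum_congr rfl fun k _ => Finset.sum_congr rfl fun m _ => ?_
  rw [hab k k.2, h.1 _ (fun t => if t = (k : ℕ) then m else b t)]
  intro t ht
  split_ifs
  · rfl
  · exact hab _ ht

theorem Good_nabla (Γ : Fin n → Fin n → Fin n → Pt n → ℝ) (i : Fin n) {p : ℕ} {ξ : Form n}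
    (h : Good p ξ) : Good p (nabla Γ i p ξ) :=
  Good_sub (Good_pdF i h) (Good_SS _ h)

/-- the even derivation `Σ g^m_k e_k ι_m` -/
noncomputable def GG (g : Fin n → Fin n → ℝ) : Lam n →ₗ[ℝ] Lam n :=
  ∑ m, ∑ k, g m k • (LinearMap.mulLeft ℝ (ee k)).comp (ii m)

theorem GG_apply (g : Fin n → Fin n → ℝ) (X : Lam n) :
    GG g X = ∑ m, ∑ k, g m k • (ee k * ii m X) := by
  simp [GG, LinearMap.sum_apply]

theorem GG_ee_mul (g : Fin n → Fin n → ℝ) (b : Fin n) (X : Lam n) :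
    GG g (ee b * X) = (∑ k, g b k • (ee k * X)) + ee b * GG g X := by
  simp only [GG_apply, ii_ee_mul, mul_sub, smul_sub, Finset.sum_sub_distrib]
  have : ∀ m k : Fin n, g m k • (ee k * (ee b * ii m X)) = -(ee b * (g m k • (ee k * ii m X))) := by
    intro m k
    rw [← mul_assoc, ee_anti, mul_smul_comm]
    simp [mul_assoc]
  simp only [this, Finset.sum_neg_distrib, Finset.mul_sum, sub_neg_eq_add]
  congr 1
  rw [Finset.sum_eq_single b]
  · simp
  · intro m _ hm; simp [hm]
  · simp

theorem GG_mul (g : Fin n → Fin n → ℝ) (X Y : Lam n) :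
    GG g (X * Y) = GG g X * Y + X * GG g Y := by
  simp only [GG_apply, Finset.sum_mul, Finset.mul_sum, ← Finset.sum_add_distrib]
  refine Finset.sum_congr rfl fun m _ => Finset.sum_congr rfl fun k _ => ?_
  rw [ii_mul, mul_add, smul_add, ← mul_assoc, ← mul_assoc, ee_mul k (al X)]
  have : al (al X) = X := CliffordAlgebra.involute_involute _
  rw [this]
  simp [mul_assoc]

theorem Ph_SS (c : Fin n) (x : Pt n) (g : Fin n → Fin n → Pt n → ℝ) (p : ℕ) (ξ : Form n)
    (h : RA p ξ) : Ph c x p (SS g p ξ) = GG (fun m k => g m k x) (Ph c x p ξ) := by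
  induction p generalizing ξ with
  | zero => rw [SS_zero, Ph_zero, GG_apply]; simp [ii_Ph_zero]
  | succ p ih =>
    have h2 : ((p : ℝ) + 1) • Ph c x (p + 1) (SS g (p + 1) ξ)
        = ((p : ℝ) + 1) • GG (fun m k => g m k x) (Ph c x (p + 1) ξ) := by
      rw [← map_smul, ← Ph_succ, ← Ph_succ, map_sum]
      simp only [In_SS, Ph_add, Ph_sum, Ph_fmul, GG_ee_mul, ih _ (RA_In h _), mul_add,
        Finset.sum_add_distrib]
      congr 1
      rw [Finset.sum_comm]
      refine Finset.sum_congr rfl fun m _ => ?_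
      rw [Finset.mul_sum]
      simp
    exact smul_right_injective _ (by positivity : ((p : ℝ) + 1) ≠ 0) h2

/-! ### Calculus on coefficient families -/

theorem SmoothOn.diffAt {U : Set (Pt n)} (hU : IsOpen U) {ξ : Form n} (h : SmoothOn U ξ)
    {x : Pt n} (hx : x ∈ U) (a : ℕ → Fin n) : DifferentiableAt ℝ (ξ a) x :=
  ((h a).differentiableOn (by simp)).differentiableAt (hU.mem_nhds hx)

theorem smooth_pd {U : Set (Pt n)} (hU : IsOpen U) {f : Pt n → ℝ}
    (h : ContDiffOn ℝ (⊤ : ℕ∞) f U) (i : Fin n) : ContDiffOn ℝ (⊤ : ℕ∞) (pd i f) U := by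
  have h1 : ContDiffOn ℝ (⊤ : ℕ∞) (fderiv ℝ f) U := h.fderiv_of_isOpen hU (by exact_mod_cast le_top)
  exact h1.clm_apply contDiffOn_const

theorem pd_comm {U : Set (Pt n)} (hU : IsOpen U) {f : Pt n → ℝ}
    (h : ContDiffOn ℝ (⊤ : ℕ∞) f U) (i j : Fin n) {x : Pt n} (hx : x ∈ U) :
    pd i (pd j f) x = pd j (pd i f) x := by
  have hc : ContDiffAt ℝ (⊤ : ℕ∞) f x := h.contDiffAt (hU.mem_nhds hx)
  have hs : IsSymmSndFDerivAt ℝ f x := hc.isSymmSndFDerivAt (by simp; exact WithTop.coe_le_coe.2 (le_top : (2 : ℕ∞) ≤ ⊤))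
  have h1 : ContDiffOn ℝ (⊤ : ℕ∞) (fderiv ℝ f) U := h.fderiv_of_isOpen hU (by exact_mod_cast le_top)
  have hd : DifferentiableAt ℝ (fderiv ℝ f) x :=
    (h1.differentiableOn (by simp)).differentiableAt (hU.mem_nhds hx)
  have key : ∀ v w : Pt n, fderiv ℝ (fun y => fderiv ℝ f y v) x w = fderiv ℝ (fderiv ℝ f) x w v := by
    intro v w
    rw [fderiv_clm_apply hd (differentiableAt_const v)]
    simp
  show fderiv ℝ (fun y => fderiv ℝ f y (Pi.single j 1)) x (Pi.single i 1)
    = fderiv ℝ (fun y => fderiv ℝ f y (Pi.single i 1)) x (Pi.single j 1)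
  rw [key, key]
  exact hs _ _

theorem pd_mul (i : Fin n) {f g : Pt n → ℝ} {x : Pt n} (hf : DifferentiableAt ℝ f x)
    (hg : DifferentiableAt ℝ g x) :
    pd i (fun y => f y * g y) x = pd i f x * g x + f x * pd i g x := by
  unfold pd
  rw [fderiv_fun_mul hf hg]
  simp; ring

theorem pd_add (i : Fin n) {f g : Pt n → ℝ} {x : Pt n} (hf : DifferentiableAt ℝ f x)
    (hg : DifferentiableAt ℝ g x) :
    pd i (fun y => f y + g y) x = pd i f x + pd i g x := by
  unfold pd
  rw [fderiv_fun_add hf hg]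
  simp

theorem pd_sub (i : Fin n) {f g : Pt n → ℝ} {x : Pt n} (hf : DifferentiableAt ℝ f x)
    (hg : DifferentiableAt ℝ g x) :
    pd i (fun y => f y - g y) x = pd i f x - pd i g x := by
  unfold pd
  rw [fderiv_fun_sub hf hg]
  simp

theorem pd_const_mul (i : Fin n) (r : ℝ) {f : Pt n → ℝ} {x : Pt n}
    (hf : DifferentiableAt ℝ f x) :
    pd i (fun y => r * f y) x = r * pd i f x := by
  unfold pd
  rw [fderiv_const_mul hf]
  simp

theorem pd_sum (i : Fin n) {ι : Type*} (s : Finset ι) {f : ι → Pt n → ℝ} {x : Pt n}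
    (hf : ∀ k, DifferentiableAt ℝ (f k) x) :
    pd i (fun y => ∑ k ∈ s, f k y) x = ∑ k ∈ s, pd i (f k) x := by
  unfold pd
  rw [fderiv_fun_sum fun k _ => hf k]
  simp

theorem smooth_add {U : Set (Pt n)} {ξ η : Form n} (h : SmoothOn U ξ) (h' : SmoothOn U η) :
    SmoothOn U (ξ + η) := fun a => (h a).add (h' a)

theorem smooth_sub {U : Set (Pt n)} {ξ η : Form n} (h : SmoothOn U ξ) (h' : SmoothOn U η) :
    SmoothOn U (ξ - η) := fun a => (h a).sub (h' a)

theorem smooth_fmul {U : Set (Pt n)} {f : Pt n → ℝ} {ξ : Form n}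
    (hf : ContDiffOn ℝ (⊤ : ℕ∞) f U) (h : SmoothOn U ξ) :
    SmoothOn U (fmul f ξ) := fun a => hf.mul (h a)

theorem smooth_smul {U : Set (Pt n)} (r : ℝ) {ξ : Form n} (h : SmoothOn U ξ) :
    SmoothOn U (r • ξ) := fun a => contDiffOn_const.mul (h a)

theorem smooth_zero {U : Set (Pt n)} : SmoothOn U (0 : Form n) := fun _ => contDiffOn_const

theorem smooth_sum {U : Set (Pt n)} {ι : Type*} (s : Finset ι) {f : ι → Form n}
    (h : ∀ i, SmoothOn U (f i)) : SmoothOn U (∑ i ∈ s, f i) :=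
  Finset.sum_induction _ (SmoothOn U) (fun _ _ => smooth_add) smooth_zero fun i _ => h i

theorem smooth_pdF {U : Set (Pt n)} (hU : IsOpen U) (i : Fin n) {ξ : Form n} (h : SmoothOn U ξ) :
    SmoothOn U (pdF i ξ) := fun a => smooth_pd hU (h a) i

theorem smooth_In {U : Set (Pt n)} (m : Fin n) {ξ : Form n} (h : SmoothOn U ξ) :
    SmoothOn U (In m ξ) := fun _ => h _

theorem smooth_wedge {U : Set (Pt n)} (p q : ℕ) {ξ η : Form n} (h : SmoothOn U ξ)
    (h' : SmoothOn U η) : SmoothOn U (wedge p q ξ η) := by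
  intro a
  refine contDiffOn_const.mul (ContDiffOn.sum fun σ _ => ?_)
  exact (contDiffOn_const.mul (h _)).mul (h' _)

theorem smooth_SS {U : Set (Pt n)} (p : ℕ) {g : Fin n → Fin n → Pt n → ℝ}
    (hg : ∀ m k, ContDiffOn ℝ (⊤ : ℕ∞) (g m k) U) {ξ : Form n} (h : SmoothOn U ξ) :
    SmoothOn U (SS g p ξ) := by
  intro a
  refine ContDiffOn.sum fun k _ => ContDiffOn.sum fun m _ => ?_
  exact (hg _ _).mul (h _)

theorem smooth_extd {U : Set (Pt n)} (hU : IsOpen U) (p : ℕ) {ξ : Form n} (h : SmoothOn U ξ) :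
    SmoothOn U (extd p ξ) := by
  intro a
  refine ContDiffOn.sum fun k _ => ?_
  exact contDiffOn_const.mul (smooth_pd hU (h _) _)

theorem smooth_nabla {U : Set (Pt n)} (hU : IsOpen U) {Γ : Fin n → Fin n → Fin n → Pt n → ℝ}
    (hΓ : ∀ i j k, ContDiffOn ℝ (⊤ : ℕ∞) (Γ i j k) U) (i : Fin n) (p : ℕ) {ξ : Form n}
    (h : SmoothOn U ξ) : SmoothOn U (nabla Γ i p ξ) := by
  rw [nabla_eq]
  exact smooth_sub (smooth_pdF hU i h) (smooth_SS p (fun m k => hΓ m i k) h)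

section rules
variable {U : Set (Pt n)} (hU : IsOpen U) {x : Pt n} (hx : x ∈ U) (k : Fin n)

theorem diffAt_of (hU : IsOpen U) (hx : x ∈ U) {f : Pt n → ℝ}
    (h : ContDiffOn ℝ (⊤ : ℕ∞) f U) : DifferentiableAt ℝ f x :=
  (h.differentiableOn (by simp)).differentiableAt (hU.mem_nhds hx)

theorem pdF_add (hU : IsOpen U) (hx : x ∈ U) {ξ η : Form n} (h : SmoothOn U ξ)
    (h' : SmoothOn U η) (a : ℕ → Fin n) :
    pdF k (ξ + η) a x = (pdF k ξ + pdF k η) a x :=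
  pd_add k (h.diffAt hU hx a) (h'.diffAt hU hx a)

theorem pdF_sub (hU : IsOpen U) (hx : x ∈ U) {ξ η : Form n} (h : SmoothOn U ξ)
    (h' : SmoothOn U η) (a : ℕ → Fin n) :
    pdF k (ξ - η) a x = (pdF k ξ - pdF k η) a x :=
  pd_sub k (h.diffAt hU hx a) (h'.diffAt hU hx a)

theorem pdF_smul (hU : IsOpen U) (hx : x ∈ U) (r : ℝ) {ξ : Form n} (h : SmoothOn U ξ)
    (a : ℕ → Fin n) :
    pdF k (r • ξ) a x = (r • pdF k ξ) a x :=
  pd_const_mul k r (h.diffAt hU hx a)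

theorem pdF_fmul (hU : IsOpen U) (hx : x ∈ U) {f : Pt n → ℝ} {ξ : Form n}
    (hf : ContDiffOn ℝ (⊤ : ℕ∞) f U) (h : SmoothOn U ξ) (a : ℕ → Fin n) :
    pdF k (fmul f ξ) a x = (fmul (pd k f) ξ + fmul f (pdF k ξ)) a x :=
  pd_mul k (diffAt_of hU hx hf) (h.diffAt hU hx a)

theorem pdF_sum (hU : IsOpen U) (hx : x ∈ U) {ι : Type*} (s : Finset ι) {f : ι → Form n}
    (h : ∀ i, SmoothOn U (f i)) (a : ℕ → Fin n) :
    pdF k (∑ i ∈ s, f i) a x = (∑ i ∈ s, pdF k (f i)) a x := by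
  have := pd_sum k s (fun i => (h i).diffAt hU hx a)
  unfold pdF
  simp only [Finset.sum_apply]
  rw [← this]
  congr 1
  funext y
  simp

theorem pdF_wedge (hU : IsOpen U) (hx : x ∈ U) (p q : ℕ) {ξ η : Form n} (h : SmoothOn U ξ)
    (h' : SmoothOn U η) (a : ℕ → Fin n) :
    pdF k (wedge p q ξ η) a x = (wedge p q (pdF k ξ) η + wedge p q ξ (pdF k η)) a x := by
  have hd1 : ∀ a, DifferentiableAt ℝ (ξ a) x := h.diffAt hU hx
  have hd2 : ∀ a, DifferentiableAt ℝ (η a) x := h'.diffAt hU hx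
  show pd k (fun y => wedge p q ξ η a y) x
    = wedge p q (pdF k ξ) η a x + wedge p q ξ (pdF k η) a x
  unfold wedge
  rw [pd_const_mul, pd_sum, ← mul_add, ← Finset.sum_add_distrib]
  · congr 1
    refine Finset.sum_congr rfl fun σ _ => ?_
    rw [pd_mul k ((hd1 _).const_mul _) (hd2 _), pd_const_mul k _ (hd1 _)]
    rfl
  · intro σ; exact ((hd1 _).const_mul _).mul (hd2 _)
  · refine DifferentiableAt.fun_sum fun σ _ => ?_
    exact ((hd1 _).const_mul _).mul (hd2 _)

theorem pdF_SS (hU : IsOpen U) (hx : x ∈ U) (p : ℕ) {g : Fin n → Fin n → Pt n → ℝ}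
    (hg : ∀ m k, ContDiffOn ℝ (⊤ : ℕ∞) (g m k) U) {ξ : Form n} (h : SmoothOn U ξ)
    (a : ℕ → Fin n) :
    pdF k (SS g p ξ) a x = (SS (fun m l => pd k (g m l)) p ξ + SS g p (pdF k ξ)) a x := by
  have hd1 : ∀ a, DifferentiableAt ℝ (ξ a) x := h.diffAt hU hx
  have hd2 : ∀ m k, DifferentiableAt ℝ (g m k) x := fun m k => diffAt_of hU hx (hg m k)
  show pd k (fun y => SS g p ξ a y) x
    = SS (fun m l => pd k (g m l)) p ξ a x + SS g p (pdF k ξ) a x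
  unfold SS
  rw [pd_sum, ← Finset.sum_add_distrib]
  · refine Finset.sum_congr rfl fun l _ => ?_
    rw [pd_sum, ← Finset.sum_add_distrib]
    · refine Finset.sum_congr rfl fun m _ => ?_
      rw [pd_mul k (hd2 _ _) (hd1 _)]
      rfl
    · intro m; exact (hd2 _ _).mul (hd1 _)
  · intro l
    refine DifferentiableAt.fun_sum fun m _ => ?_
    exact (hd2 _ _).mul (hd1 _)

theorem pdF_extd (hU : IsOpen U) (hx : x ∈ U) (p : ℕ) {ξ : Form n} (h : SmoothOn U ξ)
    (a : ℕ → Fin n) :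
    pdF k (extd p ξ) a x = extd p (pdF k ξ) a x := by
  have hd : ∀ i a, DifferentiableAt ℝ (pd i (ξ a)) x :=
    fun i a => diffAt_of hU hx (smooth_pd hU (h a) i)
  show pd k (fun y => extd p ξ a y) x = _
  unfold extd
  rw [pd_sum]
  · refine Finset.sum_congr rfl fun l _ => ?_
    rw [pd_const_mul k _ (hd _ _), pd_comm hU (h _) _ _ hx]
    rfl
  · intro l
    exact (hd _ _).const_mul _

/-! ### Symbols of derivatives -/

variable (c : Fin n)

theorem Ph_pdF_wedge (hU : IsOpen U) (hx : x ∈ U) (p q : ℕ) {ξ η : Form n} (h : SmoothOn U ξ)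
    (h' : SmoothOn U η) (hξ : DependsOn p ξ) (hη : DependsOn q η) :
    Ph c x (p + q) (pdF k (wedge p q ξ η))
      = Ph c x p (pdF k ξ) * Ph c x q η + Ph c x p ξ * Ph c x q (pdF k η) := by
  rw [Ph_congr c (p + q) (pdF_wedge k hU hx p q h h'), Ph_add,
    Ph_wedge c x p q (Dep_pdF k hξ) hη, Ph_wedge c x p q hξ (Dep_pdF k hη)]

theorem Ph_nabla (Γ : Fin n → Fin n → Fin n → Pt n → ℝ) (i : Fin n) (p : ℕ) {ξ : Form n}
    (h : Good p ξ) :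
    Ph c x p (nabla Γ i p ξ)
      = Ph c x p (pdF i ξ) - GG (fun m l => Γ m i l x) (Ph c x p ξ) := by
  rw [nabla_eq, Ph_sub, Ph_SS _ _ _ _ _ h.2]

theorem Ph_pdF_nabla (hU : IsOpen U) (hx : x ∈ U) {Γ : Fin n → Fin n → Fin n → Pt n → ℝ}
    (hΓ : ∀ i j k, ContDiffOn ℝ (⊤ : ℕ∞) (Γ i j k) U) (i : Fin n) (p : ℕ) {ξ : Form n}
    (h : Good p ξ) (hs : SmoothOn U ξ) :
    Ph c x p (pdF k (nabla Γ i p ξ))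
      = Ph c x p (pdF k (pdF i ξ)) - GG (fun m l => pd k (Γ m i l) x) (Ph c x p ξ)
        - GG (fun m l => Γ m i l x) (Ph c x p (pdF k ξ)) := by
  rw [nabla_eq, Ph_congr c p (pdF_sub k hU hx (smooth_pdF hU i hs)
    (smooth_SS p (fun m k => hΓ m i k) hs)), Ph_sub,
    Ph_congr c p (pdF_SS k hU hx p (fun m k => hΓ m i k) hs), Ph_add,
    Ph_SS _ _ _ _ _ h.2, Ph_SS _ _ _ _ _ (RA_pdF k h.2)]
  abel

theorem Ph_pdF_comm (hU : IsOpen U) (hx : x ∈ U) (i : Fin n) (p : ℕ) {ξ : Form n}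
    (hs : SmoothOn U ξ) : Ph c x p (pdF i (pdF k ξ)) = Ph c x p (pdF k (pdF i ξ)) :=
  Ph_congr c p fun a => pd_comm hU (hs a) _ _ hx

/-- connection one-form as an element of the exterior algebra -/
noncomputable def gam (Γ : Fin n → Fin n → Fin n → Pt n → ℝ) (x : Pt n) (m i : Fin n) : Lam n :=
  ∑ l, Γ m i l x • ee l

/-- curvature-like two-form -/
noncomputable def KK (Γ : Fin n → Fin n → Fin n → Pt n → ℝ) (x : Pt n) (m i : Fin n) : Lam n :=
  (∑ r, gam Γ x r i * gam Γ x m r) - ∑ k, ∑ l, pd k (Γ m i l) x • (ee k * ee l)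

theorem GG_gam (Γ : Fin n → Fin n → Fin n → Pt n → ℝ) (i : Fin n) (X : Lam n) :
    GG (fun m l => Γ m i l x) X = ∑ m, gam Γ x m i * ii m X := by
  rw [GG_apply]
  refine Finset.sum_congr rfl fun m _ => ?_
  unfold gam
  rw [Finset.sum_mul]
  simp

theorem key1 (hU : IsOpen U) (hx : x ∈ U) {Γ : Fin n → Fin n → Fin n → Pt n → ℝ}
    (hΓ : ∀ i j k, ContDiffOn ℝ (⊤ : ℕ∞) (Γ i j k) U) (i : Fin n) (p : ℕ) {ξ : Form n}
    (h : Good p ξ) (hs : SmoothOn U ξ) :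
    ∑ k, ee k * Ph c x p (pdF k (nabla Γ i p ξ))
      = Ph c x (p + 1) (nabla Γ i (p + 1) (extd p ξ))
        + ∑ m, gam Γ x m i * Ph c x p (nabla Γ m p ξ)
        + ∑ m, KK Γ x m i * ii m (Ph c x p ξ) := by
  have hP : ∀ k, Ph c x p (pdF k ξ)
      = Ph c x p (nabla Γ k p ξ) + ∑ m, gam Γ x m k * ii m (Ph c x p ξ) := by
    intro k; rw [Ph_nabla c Γ k p h, GG_gam]; abel
  -- the left-hand side
  have hL : ∑ k, ee k * Ph c x p (pdF k (nabla Γ i p ξ))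
      = ∑ k, ee k * Ph c x p (pdF k (pdF i ξ))
        - ∑ m, (∑ k, ∑ l, pd k (Γ m i l) x • (ee k * ee l)) * ii m (Ph c x p ξ)
        - ∑ k, ee k * GG (fun m l => Γ m i l x) (Ph c x p (pdF k ξ)) := by
    simp only [Ph_pdF_nabla _ c hU hx hΓ i p h hs, mul_sub, Finset.sum_sub_distrib]
    congr 2
    simp only [GG_apply, Finset.mul_sum, Finset.sum_mul]
    rw [Finset.sum_comm]
    refine Finset.sum_congr rfl fun m _ => Finset.sum_congr rfl fun k _ =>
      Finset.sum_congr rfl fun l _ => ?_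
    simp [mul_assoc]
  have hR : Ph c x (p + 1) (nabla Γ i (p + 1) (extd p ξ))
      = ∑ k, ee k * Ph c x p (pdF k (pdF i ξ))
        - (∑ m, gam Γ x m i * Ph c x p (pdF m ξ)
          + ∑ k, ee k * GG (fun m l => Γ m i l x) (Ph c x p (pdF k ξ))) := by
    rw [Ph_nabla c Γ i _ (Good_extd h), Ph_congr c (p + 1) (pdF_extd i hU hx p hs),
      Ph_extd _ _ _ _ (Dep_pdF i h.1), Ph_extd _ _ _ _ h.1, map_sum]
    simp only [GG_ee_mul, Finset.sum_add_distrib]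
    congr 2
    refine Finset.sum_congr rfl fun k _ => ?_
    unfold gam
    rw [Finset.sum_mul]
    simp
  have hK : ∑ m, KK Γ x m i * ii m (Ph c x p ξ)
      = ∑ m, gam Γ x m i * (∑ r, gam Γ x r m * ii r (Ph c x p ξ))
        - ∑ m, (∑ k, ∑ l, pd k (Γ m i l) x • (ee k * ee l)) * ii m (Ph c x p ξ) := by
    unfold KK
    simp only [sub_mul, Finset.sum_sub_distrib]
    congr 1
    simp only [Finset.sum_mul, Finset.mul_sum]
    rw [Finset.sum_comm]
    simp only [mul_assoc]
  have hG : ∑ m, gam Γ x m i * Ph c x p (pdF m ξ)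
      = ∑ m, gam Γ x m i * Ph c x p (nabla Γ m p ξ)
        + ∑ m, gam Γ x m i * (∑ r, gam Γ x r m * ii r (Ph c x p ξ)) := by
    rw [← Finset.sum_add_distrib]
    refine Finset.sum_congr rfl fun m _ => ?_
    rw [hP m, mul_add]
  rw [hL, hR, hK, hG]
  abel

theorem key2 (Γ : Fin n → Fin n → Fin n → Pt n → ℝ) (i : Fin n) (p : ℕ) {ξ : Form n}
    (h : Good p ξ) :
    ∑ k, ee k * ii i (Ph c x p (pdF k ξ))
      = Ph c x p (nabla Γ i p ξ) + ∑ m, gam Γ x m i * ii m (Ph c x p ξ)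
        - ii i (Ph c x (p + 1) (extd p ξ)) := by
  rw [Ph_extd _ _ _ _ h.1, map_sum, Ph_nabla c Γ i p h, GG_gam]
  simp only [ii_ee_mul, Finset.sum_sub_distrib]
  simp
end rules

/-! ### The two-forms `H` -/

theorem gam_mul (Γ : Fin n → Fin n → Fin n → Pt n → ℝ) (x : Pt n) (m i : Fin n) (X : Lam n) :
    gam Γ x m i * X = al X * gam Γ x m i := by
  unfold gam
  simp only [Finset.sum_mul, Finset.mul_sum, smul_mul_assoc, mul_smul_comm, ee_mul]

theorem eeee_mul (k l : Fin n) (X : Lam n) : ee k * ee l * X = X * (ee k * ee l) := by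
  rw [mul_assoc, ee_mul l X, ← mul_assoc, ee_mul k (al X)]
  have : al (al X) = X := CliffordAlgebra.involute_involute _
  rw [this, mul_assoc]

theorem KK_eq (Γ : Fin n → Fin n → Fin n → Pt n → ℝ) (x : Pt n) (m i : Fin n) :
    KK Γ x m i = ∑ k, ∑ l,
      (∑ r, Γ r i k x * Γ m r l x - pd k (Γ m i l) x) • (ee k * ee l) := by
  unfold KK gam
  simp only [sub_smul, Finset.sum_sub_distrib, Finset.sum_smul]
  congr 1
  simp only [Finset.sum_mul_sum, smul_mul_smul_comm]
  rw [Finset.sum_comm]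
  refine Finset.sum_congr rfl fun k _ => ?_
  rw [Finset.sum_comm]

theorem KK_mul (Γ : Fin n → Fin n → Fin n → Pt n → ℝ) (x : Pt n) (m i : Fin n) (X : Lam n) :
    KK Γ x m i * X = X * KK Γ x m i := by
  rw [KK_eq]
  simp only [Finset.sum_mul, Finset.mul_sum, smul_mul_assoc, mul_smul_comm, eeee_mul]

theorem Good_H (ω : Fin n → Fin n → Pt n → ℝ) (Γ : Fin n → Fin n → Fin n → Pt n → ℝ)
    (i j : Fin n) : Good 2 (Hform ω Γ i j) := by
  refine ⟨fun a b hab => ?_, fun m => trivial, fun m k => ?_⟩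
  · funext x
    unfold Hform
    rw [hab 0 (by omega), hab 1 (by omega)]
  · funext a x
    show Hform ω Γ i j (cns k (cns m a)) x = - Hform ω Γ i j (cns m (cns k a)) x
    unfold Hform
    simp only [cns]
    rw [← mul_neg, ← Finset.sum_neg_distrib]
    congr 1
    refine Finset.sum_congr rfl fun s _ => ?_
    simp
    ring

theorem smooth_H {U : Set (Pt n)} (hU : IsOpen U) {ω : Fin n → Fin n → Pt n → ℝ}
    {Γ : Fin n → Fin n → Fin n → Pt n → ℝ}
    (hω : ∀ i j, ContDiffOn ℝ (⊤ : ℕ∞) (ω i j) U)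
    (hΓ : ∀ i j k, ContDiffOn ℝ (⊤ : ℕ∞) (Γ i j k) U) (i j : Fin n) :
    SmoothOn U (Hform ω Γ i j) := by
  have hT : ∀ i j k, ContDiffOn ℝ (⊤ : ℕ∞) (Tor Γ i j k) U :=
    fun i j k => (hΓ i j k).sub (hΓ i k j)
  have hR : ∀ l i j k, ContDiffOn ℝ (⊤ : ℕ∞) (Rc Γ l i j k) U := fun l i j k =>
    (((smooth_pd hU (hΓ _ _ _) _).sub (smooth_pd hU (hΓ _ _ _) _)).add
      (ContDiffOn.sum fun m _ => (hΓ _ _ _).mul (hΓ _ _ _))).sub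
      (ContDiffOn.sum fun m _ => (hΓ _ _ _).mul (hΓ _ _ _))
  have hC : ∀ j a b s, ContDiffOn ℝ (⊤ : ℕ∞) (covT Γ j a b s) U := fun j a b s =>
    (((smooth_pd hU (hT _ _ _) _).add
      (ContDiffOn.sum fun m _ => (hΓ _ _ _).mul (hT _ _ _))).sub
      (ContDiffOn.sum fun m _ => (hΓ _ _ _).mul (hT _ _ _))).sub
      (ContDiffOn.sum fun m _ => (hΓ _ _ _).mul (hT _ _ _))
  intro a
  refine contDiffOn_const.mul (ContDiffOn.sum fun s _ => (hω _ _).mul ?_)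
  exact ((hC _ _ _ _).sub (contDiffOn_const.mul (hR _ _ _ _))).sub
    ((hC _ _ _ _).sub (contDiffOn_const.mul (hR _ _ _ _)))

theorem Ph_two (c : Fin n) (x : Pt n) (ξ : Form n) :
    Ph c x 2 ξ = (2⁻¹ : ℝ) • ∑ m, ∑ k, ξ (cns m (cns k fun _ => c)) x • (ee m * ee k) := by
  have : ∀ r : ℝ, ∀ X : Lam n, X * algebraMap ℝ (Lam n) r = r • X := by
    intro r X; rw [← Algebra.commutes, Algebra.smul_def]
  simp only [Ph, In, this]
  norm_num
  simp only [Finset.mul_sum, mul_smul_comm]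

theorem H_coeff {U : Set (Pt n)} (hU : IsOpen U) {x : Pt n} (hx : x ∈ U)
    (ω : Fin n → Fin n → Pt n → ℝ)
    {Γ : Fin n → Fin n → Fin n → Pt n → ℝ}
    (hΓ : ∀ i j k, ContDiffOn ℝ (⊤ : ℕ∞) (Γ i j k) U) (i j : Fin n) (a : ℕ → Fin n) :
    Hform ω Γ i j a x = (1 / 2 : ℝ) * ∑ s, ω i s x *
      ((∑ r, Γ r s (a 0) x * Γ j r (a 1) x - pd (a 0) (Γ j s (a 1)) x)
        - (∑ r, Γ r s (a 1) x * Γ j r (a 0) x - pd (a 1) (Γ j s (a 0)) x)) := by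
  unfold Hform
  rw [Finset.mul_sum, Finset.mul_sum]
  refine Finset.sum_congr rfl fun s _ => ?_
  generalize a 0 = u
  generalize a 1 = v
  have hT : ∀ u v, pd s (Tor Γ j u v) x = pd s (Γ j u v) x - pd s (Γ j v u) x := fun u v =>
    pd_sub s (diffAt_of hU hx (hΓ _ _ _)) (diffAt_of hU hx (hΓ _ _ _))
  unfold covT Rc
  simp only [hT]
  unfold Tor
  simp only [mul_sub, Finset.sum_sub_distrib]
  have e1 : ∀ u v, ∑ m, Γ m s u x * Γ j v m x = ∑ m, Γ m s u x * Γ j v m x := fun _ _ => rfl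
  have e2 : ∀ u v, ∑ m, Γ j s m x * Γ m u v x = ∑ m, Γ m u v x * Γ j s m x := fun u v =>
    Finset.sum_congr rfl fun m _ => mul_comm _ _
  simp only [e2]
  ring

theorem Ph_H {U : Set (Pt n)} (hU : IsOpen U) {x : Pt n} (hx : x ∈ U) (c : Fin n)
    (ω : Fin n → Fin n → Pt n → ℝ)
    {Γ : Fin n → Fin n → Fin n → Pt n → ℝ}
    (hΓ : ∀ i j k, ContDiffOn ℝ (⊤ : ℕ∞) (Γ i j k) U) (i j : Fin n) :
    Ph c x 2 (Hform ω Γ i j) = (2⁻¹ : ℝ) • ∑ s, ω i s x • KK Γ x j s := by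
  rw [Ph_two]
  congr 1
  have hc : ∀ m k, Hform ω Γ i j (cns m (cns k fun _ => c)) x • (ee m * ee k)
      = ∑ s, ω i s x • ((1 / 2 : ℝ) •
      ((∑ r, Γ r s m x * Γ j r k x - pd m (Γ j s k) x) • (ee m * ee k)
        - (∑ r, Γ r s k x * Γ j r m x - pd k (Γ j s m) x) • (ee m * ee k))) := by
    intro m k
    rw [H_coeff hU hx ω hΓ, Finset.mul_sum, Finset.sum_smul]
    refine Finset.sum_congr rfl fun s _ => ?_
    simp only [cns, ← sub_smul, smul_smul]
    congr 1
    simp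
    ring
  simp only [hc]
  have h1 : ∀ s, KK Γ x j s = ∑ m, ∑ k, (1 / 2 : ℝ) •
      ((∑ r, Γ r s m x * Γ j r k x - pd m (Γ j s k) x) • (ee m * ee k)
        - (∑ r, Γ r s k x * Γ j r m x - pd k (Γ j s m) x) • (ee m * ee k)) := by
    intro s
    simp only [← Finset.smul_sum, Finset.sum_sub_distrib]
    have h2 : ∑ m, ∑ k, (∑ r, Γ r s k x * Γ j r m x - pd k (Γ j s m) x) • (ee m * ee k)
        = - KK Γ x j s := by
      rw [Finset.sum_comm, KK_eq, ← Finset.sum_neg_distrib]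
      refine Finset.sum_congr rfl fun k _ => ?_
      rw [← Finset.sum_neg_distrib]
      refine Finset.sum_congr rfl fun m _ => ?_
      rw [ee_anti, smul_neg]
    rw [h2, ← KK_eq, sub_neg_eq_add, ← two_smul ℝ, smul_smul]
    norm_num
  simp only [h1, Finset.smul_sum]
  conv_rhs => rw [Finset.sum_comm]
  refine Finset.sum_congr rfl fun m _ => ?_
  rw [Finset.sum_comm]

/-! ### Symbols of the correction terms -/

theorem Ph_wedge' (c : Fin n) (x : Pt n) {p q N : ℕ} (hN : p + q = N) {ξ η : Form n}
    (hξ : DependsOn p ξ) (hη : DependsOn q η) :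
    Ph c x N (wedge p q ξ η) = Ph c x p ξ * Ph c x q η := by
  subst hN; exact Ph_wedge c x p q hξ hη

theorem Good_wedge' {p q N : ℕ} (hN : p + q = N) {ξ η : Form n}
    (hξ : DependsOn p ξ) (hη : DependsOn q η) : Good N (wedge p q ξ η) := by
  subst hN; exact Good_wedge p q hξ hη

theorem wedge_zero_left (p q : ℕ) (η : Form n) : wedge p q 0 η = 0 := by
  funext a x; simp [wedge]

theorem wedge_zero_right (p q : ℕ) (ξ : Form n) : wedge p q ξ 0 = 0 := by
  funext a x; simp [wedge]

theorem intr_zero (m : Fin n) (ξ : Form n) : intr 0 m ξ = 0 := rfl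

section corr
variable (ω : Fin n → Fin n → Pt n → ℝ) (Γ : Fin n → Fin n → Fin n → Pt n → ℝ)

theorem Hat_zero_left (q : ℕ) (ξ η : Form n) : HatCorr ω Γ 0 q ξ η = 0 := by
  unfold HatCorr
  simp only [intr_zero, wedge_zero_left, wedge_zero_right]
  simp

theorem Hat_zero_right (p : ℕ) (ξ η : Form n) : HatCorr ω Γ p 0 ξ η = 0 := by
  unfold HatCorr
  simp only [intr_zero, wedge_zero_right]
  simp

theorem Hat_succ (p q : ℕ) (ξ η : Form n) : HatCorr ω Γ (p + 1) (q + 1) ξ η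
    = ((-1 : ℝ) ^ (p + 1 + 1)) • ∑ i, ∑ j,
      wedge (2 + p) q (wedge 2 p (Hform ω Γ i j) (In i ξ)) (In j η) := rfl

theorem Good_Q {p q N : ℕ} (hN : p + q = N) {ξ η : Form n} (hξ : Good p ξ) (hη : Good q η) :
    Good N (Qcorr ω Γ p q ξ η) :=
  Good_smul _ (Good_sum _ fun i => Good_sum _ fun j => Good_fmul _
    (Good_wedge' hN (Good_nabla Γ i hξ).1 (Good_nabla Γ j hη).1))

theorem Good_Hat {p q N : ℕ} (hN : p + q = N) {ξ η : Form n} (hξ : Good p ξ) (hη : Good q η) :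
    Good N (HatCorr ω Γ p q ξ η) := by
  rcases p with _ | p
  · rw [Hat_zero_left]; exact Good_zero _
  rcases q with _ | q
  · rw [Hat_zero_right]; exact Good_zero _
  rw [Hat_succ]
  exact Good_smul _ (Good_sum _ fun i => Good_sum _ fun j =>
    Good_wedge' (by omega) (Dep_wedge 2 p (Good_H ω Γ i j).1 (Dep_In hξ.1 i)) (Dep_In hη.1 j))

theorem Ph_Q (c : Fin n) (x : Pt n) {p q N : ℕ} (hN : p + q = N) {ξ η : Form n}
    (hξ : Good p ξ) (hη : Good q η) :
    Ph c x N (Qcorr ω Γ p q ξ η) = (2⁻¹ : ℝ) • ∑ i, ∑ j, ω i j x •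
      (Ph c x p (nabla Γ i p ξ) * Ph c x q (nabla Γ j q η)) := by
  unfold Qcorr
  rw [Ph_smul, Ph_sum]
  congr 1
  refine Finset.sum_congr rfl fun i _ => ?_
  rw [Ph_sum]
  refine Finset.sum_congr rfl fun j _ => ?_
  rw [Ph_fmul, Ph_wedge' c x hN (Good_nabla Γ i hξ).1 (Good_nabla Γ j hη).1]

theorem Ph_Hat (c : Fin n) (x : Pt n) {p q N : ℕ} (hN : p + q = N) {ξ η : Form n}
    (hξ : Good p ξ) (hη : Good q η) :
    Ph c x N (HatCorr ω Γ p q ξ η) = ((-1 : ℝ) ^ (p + 1)) • ∑ i, ∑ j,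
      (Ph c x 2 (Hform ω Γ i j) * ii i (Ph c x p ξ) * ii j (Ph c x q η)) := by
  rcases p with _ | p
  · rw [Hat_zero_left]; simp [ii_Ph_zero, Ph_zero]
  rcases q with _ | q
  · rw [Hat_zero_right]; simp [ii_Ph_zero, Ph_zero]
  rw [Hat_succ, Ph_smul, Ph_sum]
  congr 1
  refine Finset.sum_congr rfl fun i _ => ?_
  rw [Ph_sum]
  refine Finset.sum_congr rfl fun j _ => ?_
  rw [Ph_wedge' c x (by omega) (Dep_wedge 2 p (Good_H ω Γ i j).1 (Dep_In hξ.1 i)) (Dep_In hη.1 j),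
    Ph_wedge c x 2 p (Good_H ω Γ i j).1 (Dep_In hξ.1 i), ii_Ph _ _ _ _ _ hξ.2, ii_Ph _ _ _ _ _ hη.2]

variable {ω Γ} {U : Set (Pt n)}

theorem smooth_Q (hU : IsOpen U) (hω : ∀ i j, ContDiffOn ℝ (⊤ : ℕ∞) (ω i j) U)
    (hΓ : ∀ i j k, ContDiffOn ℝ (⊤ : ℕ∞) (Γ i j k) U) (p q : ℕ) {ξ η : Form n}
    (hξ : SmoothOn U ξ) (hη : SmoothOn U η) : SmoothOn U (Qcorr ω Γ p q ξ η) :=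
  smooth_smul _ (smooth_sum _ fun i => smooth_sum _ fun j => smooth_fmul (hω i j)
    (smooth_wedge p q (smooth_nabla hU hΓ i p hξ) (smooth_nabla hU hΓ j q hη)))

theorem smooth_Hat (hU : IsOpen U) (hω : ∀ i j, ContDiffOn ℝ (⊤ : ℕ∞) (ω i j) U)
    (hΓ : ∀ i j k, ContDiffOn ℝ (⊤ : ℕ∞) (Γ i j k) U) (p q : ℕ) {ξ η : Form n}
    (hξ : SmoothOn U ξ) (hη : SmoothOn U η) : SmoothOn U (HatCorr ω Γ p q ξ η) := by
  rcases p with _ | p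
  · rw [Hat_zero_left]; exact smooth_zero
  rcases q with _ | q
  · rw [Hat_zero_right]; exact smooth_zero
  rw [Hat_succ]
  exact smooth_smul _ (smooth_sum _ fun i => smooth_sum _ fun j => smooth_wedge _ _
    (smooth_wedge _ _ (smooth_H hU hω hΓ i j) (smooth_In i hξ)) (smooth_In j hη))

theorem Ph_pdF_Q (hU : IsOpen U) {x : Pt n} (hx : x ∈ U) (k c : Fin n)
    (hω : ∀ i j, ContDiffOn ℝ (⊤ : ℕ∞) (ω i j) U)
    (hΓ : ∀ i j k, ContDiffOn ℝ (⊤ : ℕ∞) (Γ i j k) U) {p q : ℕ} {ξ η : Form n}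
    (hξ : Good p ξ) (hη : Good q η) (sξ : SmoothOn U ξ) (sη : SmoothOn U η) :
    Ph c x (p + q) (pdF k (Qcorr ω Γ p q ξ η)) = (2⁻¹ : ℝ) • ∑ i, ∑ j,
      (pd k (ω i j) x • (Ph c x p (nabla Γ i p ξ) * Ph c x q (nabla Γ j q η))
        + ω i j x • (Ph c x p (pdF k (nabla Γ i p ξ)) * Ph c x q (nabla Γ j q η)
          + Ph c x p (nabla Γ i p ξ) * Ph c x q (pdF k (nabla Γ j q η)))) := by
  have s1 := fun i => smooth_nabla hU hΓ i p sξ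
  have s2 := fun i => smooth_nabla hU hΓ i q sη
  have s3 := fun i j => smooth_wedge p q (s1 i) (s2 j)
  have s4 := fun i j => smooth_fmul (hω i j) (s3 i j)
  have s5 := fun i => smooth_sum Finset.univ (s4 i)
  unfold Qcorr
  rw [Ph_congr c _ (pdF_smul k hU hx _ (smooth_sum _ s5)), Ph_smul,
    Ph_congr c _ (pdF_sum k hU hx _ s5), Ph_sum]
  congr 1
  refine Finset.sum_congr rfl fun i _ => ?_
  rw [Ph_congr c _ (pdF_sum k hU hx _ (s4 i)), Ph_sum]
  refine Finset.sum_congr rfl fun j _ => ?_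
  rw [Ph_congr c _ (pdF_fmul k hU hx (hω i j) (s3 i j)), Ph_add, Ph_fmul, Ph_fmul,
    Ph_wedge c x p q (Good_nabla Γ i hξ).1 (Good_nabla Γ j hη).1,
    Ph_pdF_wedge k c hU hx p q (s1 i) (s2 j) (Good_nabla Γ i hξ).1 (Good_nabla Γ j hη).1]

theorem pdF_zero (k : Fin n) : pdF k (0 : Form n) = 0 := by
  funext a x
  show fderiv ℝ (fun _ => (0 : ℝ)) x _ = 0
  simp

theorem Ph_pdF_Hat (hU : IsOpen U) {x : Pt n} (hx : x ∈ U) (k c : Fin n)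
    (hω : ∀ i j, ContDiffOn ℝ (⊤ : ℕ∞) (ω i j) U)
    (hΓ : ∀ i j k, ContDiffOn ℝ (⊤ : ℕ∞) (Γ i j k) U) {p q : ℕ} {ξ η : Form n}
    (hξ : Good p ξ) (hη : Good q η) (sξ : SmoothOn U ξ) (sη : SmoothOn U η) :
    Ph c x (p + q) (pdF k (HatCorr ω Γ p q ξ η)) = ((-1 : ℝ) ^ (p + 1)) • ∑ i, ∑ j,
      ((Ph c x 2 (pdF k (Hform ω Γ i j)) * ii i (Ph c x p ξ)
        + Ph c x 2 (Hform ω Γ i j) * ii i (Ph c x p (pdF k ξ))) * ii j (Ph c x q η)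
        + Ph c x 2 (Hform ω Γ i j) * ii i (Ph c x p ξ) * ii j (Ph c x q (pdF k η))) := by
  rcases p with _ | p
  · rw [Hat_zero_left, pdF_zero]; simp [ii_Ph_zero, Ph_zero]
  rcases q with _ | q
  · rw [Hat_zero_right, pdF_zero]; simp [ii_Ph_zero, Ph_zero]
  have s1 := fun i j => smooth_H hU hω hΓ i j
  have s2 := fun i => smooth_In (U := U) i sξ
  have s3 := fun i => smooth_In (U := U) i sη
  have s4 := fun i j => smooth_wedge 2 p (s1 i j) (s2 i)
  have s5 := fun i j => smooth_wedge (2 + p) q (s4 i j) (s3 j)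
  have s6 := fun i => smooth_sum Finset.univ (s5 i)
  rw [Hat_succ, Ph_congr c _ (pdF_smul k hU hx _ (smooth_sum _ s6)), Ph_smul,
    Ph_congr c _ (pdF_sum k hU hx _ s6), Ph_sum]
  congr 1
  refine Finset.sum_congr rfl fun i _ => ?_
  rw [Ph_congr c _ (pdF_sum k hU hx _ (s5 i)), Ph_sum]
  refine Finset.sum_congr rfl fun j _ => ?_
  have d1 := (Good_H ω Γ i j).1
  have d2 := Dep_In hξ.1 i
  have d3 := Dep_In hη.1 j
  have e : p + 1 + (q + 1) = 2 + p + q := by omega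
  rw [e, Ph_pdF_wedge k c hU hx (2 + p) q (s4 i j) (s3 j) (Dep_wedge 2 p d1 d2) d3,
    Ph_pdF_wedge k c hU hx 2 p (s1 i j) (s2 i) d1 d2, Ph_wedge c x 2 p d1 d2,
    ii_Ph _ _ _ _ _ hξ.2, ii_Ph _ _ _ _ _ hη.2, ii_Ph _ _ _ _ _ (RA_pdF k hξ.2),
    ii_Ph _ _ _ _ _ (RA_pdF k hη.2), In_pdF, In_pdF]
end corr

/-! ### Abstract algebra of the two defects -/

section alg
variable {A : Type*} [Ring A] [Algebra ℝ A]

theorem alg_Q (ω : Fin n → Fin n → ℝ) (W g K H : Fin n → Fin n → A)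
    (Xn Yn Xi Yi Xdn Ydn dXn dYn : Fin n → A) (s : ℝ) (hs : s * s = 1)
    (hω : ∀ i j, ω i j = - ω j i)
    (hW : ∀ i j, W i j + ∑ k, ω k j • g i k + ∑ k, ω i k • g j k = 0)
    (hX : ∀ i, dXn i = Xdn i + ∑ m, g m i * Xn m + ∑ m, K m i * Xi m)
    (hY : ∀ i, dYn i = Ydn i + ∑ m, g m i * Yn m + ∑ m, K m i * Yi m)
    (hg : ∀ m i j, Xn j * g m i = s • (g m i * Xn j))
    (hK : ∀ m i j, Xn j * K m i = K m i * Xn j)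
    (hH : ∀ i j, H i j = (2⁻¹ : ℝ) • ∑ r, ω i r • K j r) :
    (2⁻¹ : ℝ) • ∑ i, ∑ j, (W i j * (Xn i * Yn j)
        + ω i j • (dXn i * Yn j + s • (Xn i * dYn j)))
      = (2⁻¹ : ℝ) • ∑ i, ∑ j, ω i j • (Xdn i * Yn j)
        + s • ((2⁻¹ : ℝ) • ∑ i, ∑ j, ω i j • (Xn i * Ydn j))
        - ∑ i, ∑ j, H j i * Xi i * Yn j + s • ∑ i, ∑ j, H i j * Xn i * Yi j := by
  have hW' : ∀ i j, W i j = -∑ k, ω k j • g i k - ∑ k, ω i k • g j k := by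
    intro i j
    have := hW i j
    rw [← sub_eq_zero, ← this]; abel
  have t1 : ∑ i, ∑ j, W i j * (Xn i * Yn j)
      = -(∑ i, ∑ j, ∑ k, ω k j • (g i k * Xn i * Yn j))
        - ∑ i, ∑ j, ∑ k, ω i k • (g j k * Xn i * Yn j) := by
    simp only [hW', sub_mul, neg_mul, Finset.sum_mul, Finset.sum_sub_distrib,
      Finset.sum_neg_distrib, smul_mul_assoc, mul_assoc]
  have t2 : ∑ i, ∑ j, ω i j • (dXn i * Yn j)
      = ∑ i, ∑ j, ω i j • (Xdn i * Yn j) + ∑ i, ∑ j, ∑ k, ω k j • (g i k * Xn i * Yn j)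
        - (2 : ℝ) • ∑ i, ∑ j, H j i * Xi i * Yn j := by
    have a1 : ∑ i, ∑ j, ∑ k, ω k j • (g i k * Xn i * Yn j)
        = ∑ i, ∑ j, ω i j • ((∑ m, g m i * Xn m) * Yn j) := by
      simp only [Finset.sum_mul, Finset.smul_sum]
      rw [Finset.sum_comm_cycle]
      refine Finset.sum_congr rfl fun i _ => ?_
      rw [Finset.sum_comm]
    have a2 : (2 : ℝ) • ∑ i, ∑ j, H j i * Xi i * Yn j
        = - ∑ i, ∑ j, ω i j • ((∑ m, K m i * Xi m) * Yn j) := by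
      simp only [hH, smul_mul_assoc, ← Finset.smul_sum, smul_smul]
      norm_num
      simp only [Finset.sum_mul, Finset.smul_sum, smul_mul_assoc, ← Finset.sum_neg_distrib]
      conv_rhs => rw [Finset.sum_comm_cycle]
      refine Finset.sum_congr rfl fun m _ => ?_
      conv_rhs => rw [Finset.sum_comm]
      refine Finset.sum_congr rfl fun j _ => Finset.sum_congr rfl fun r _ => ?_
      rw [hω j r, neg_smul]
    rw [a1, a2]
    simp only [hX, add_mul, smul_add, Finset.sum_add_distrib]
    abel
  have t3 : ∑ i, ∑ j, ω i j • s • (Xn i * dYn j)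
      = s • ∑ i, ∑ j, ω i j • (Xn i * Ydn j) + ∑ i, ∑ j, ∑ k, ω i k • (g j k * Xn i * Yn j)
        + (2 : ℝ) • s • ∑ i, ∑ j, H i j * Xn i * Yi j := by
    have a1 : ∑ i, ∑ j, ∑ k, ω i k • (g j k * Xn i * Yn j)
        = s • ∑ i, ∑ j, ω i j • (Xn i * (∑ m, g m j * Yn m)) := by
      simp only [Finset.mul_sum, Finset.smul_sum, ← mul_assoc, hg]
      refine Finset.sum_congr rfl fun i _ => ?_
      rw [Finset.sum_comm]
      refine Finset.sum_congr rfl fun j _ => Finset.sum_congr rfl fun m _ => ?_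
      rw [smul_mul_assoc, smul_comm, smul_smul, smul_smul, mul_assoc (ω i j) s s, hs, mul_one]
    have a2 : (2 : ℝ) • s • ∑ i, ∑ j, H i j * Xn i * Yi j
        = s • ∑ i, ∑ j, ω i j • (Xn i * (∑ m, K m j * Yi m)) := by
      rw [smul_comm]
      congr 1
      simp only [hH, smul_mul_assoc, ← Finset.smul_sum, smul_smul]
      norm_num
      simp only [Finset.mul_sum, Finset.sum_mul, Finset.smul_sum, ← mul_assoc, hK, smul_mul_assoc]
      refine Finset.sum_congr rfl fun i _ => ?_
      rw [Finset.sum_comm]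
    rw [a1, a2]
    simp only [hY, mul_add, smul_add, Finset.sum_add_distrib, ← Finset.smul_sum,
      smul_comm _ s]
  have t4 : ∑ i, ∑ j, (W i j * (Xn i * Yn j) + ω i j • (dXn i * Yn j + s • (Xn i * dYn j)))
      = ∑ i, ∑ j, W i j * (Xn i * Yn j) + ∑ i, ∑ j, ω i j • (dXn i * Yn j)
        + ∑ i, ∑ j, ω i j • s • (Xn i * dYn j) := by
    simp only [smul_add, Finset.sum_add_distrib]
    abel
  rw [t4, t1, t2, t3]
  module

theorem alg_B (g H dH : Fin n → Fin n → A)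
    (Xn Yn Xi Yi Xdi Ydi dXi dYi : Fin n → A) (s : ℝ) (hs : s * s = 1)
    (hX : ∀ i, dXi i = Xn i + ∑ m, g m i * Xi m - Xdi i)
    (hY : ∀ i, dYi i = Yn i + ∑ m, g m i * Yi m - Ydi i)
    (hg : ∀ m i j, Xi j * g m i = -(s • (g m i * Xi j)))
    (hHg : ∀ i j m k, H i j * g m k = g m k * H i j) :
    (-s) • ∑ i, ∑ j, (dH i j * Xi i * Yi j + H i j * dXi i * Yi j
        - s • (H i j * Xi i * dYi j))
      = s • ∑ i, ∑ j, H i j * Xdi i * Yi j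
        - ∑ i, ∑ j, H i j * Xi i * Ydi j
        - s • ∑ i, ∑ j, H i j * Xn i * Yi j + ∑ i, ∑ j, H i j * Xi i * Yn j
        - s • ∑ i, ∑ j, (dH i j + ∑ r, g i r * H r j + ∑ r, g j r * H i r) * Xi i * Yi j := by
  have b1 : ∑ i, ∑ j, H i j * dXi i * Yi j = ∑ i, ∑ j, H i j * Xn i * Yi j
      + ∑ i, ∑ j, (∑ r, g i r * H r j) * Xi i * Yi j - ∑ i, ∑ j, H i j * Xdi i * Yi j := by
    have a1 : ∑ i, ∑ j, (∑ r, g i r * H r j) * Xi i * Yi j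
        = ∑ i, ∑ j, H i j * (∑ m, g m i * Xi m) * Yi j := by
      simp only [Finset.sum_mul, Finset.mul_sum, ← mul_assoc, hHg]
      rw [Finset.sum_comm_cycle]
      refine Finset.sum_congr rfl fun i _ => ?_
      rw [Finset.sum_comm]
    rw [a1]
    simp only [hX, mul_add, add_mul, mul_sub, sub_mul, Finset.sum_add_distrib,
      Finset.sum_sub_distrib]
  have b2 : ∑ i, ∑ j, H i j * Xi i * dYi j = ∑ i, ∑ j, H i j * Xi i * Yn j
      - s • ∑ i, ∑ j, (∑ r, g j r * H i r) * Xi i * Yi j - ∑ i, ∑ j, H i j * Xi i * Ydi j := by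
    have a1 : - (s • ∑ i, ∑ j, (∑ r, g j r * H i r) * Xi i * Yi j)
        = ∑ i, ∑ j, H i j * Xi i * (∑ m, g m j * Yi m) := by
      simp only [Finset.sum_mul, Finset.mul_sum, Finset.smul_sum, ← Finset.sum_neg_distrib]
      refine Finset.sum_congr rfl fun i _ => ?_
      rw [Finset.sum_comm]
      refine Finset.sum_congr rfl fun j _ => Finset.sum_congr rfl fun m _ => ?_
      rw [mul_assoc (H i j), ← mul_assoc (Xi i), hg, ← hHg]
      simp [mul_assoc]
    rw [sub_eq_add_neg (∑ i, ∑ j, H i j * Xi i * Yn j), a1]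
    simp only [hY, mul_add, mul_sub, Finset.sum_add_distrib, Finset.sum_sub_distrib]
  have b3 : ∑ i, ∑ j, (dH i j * Xi i * Yi j + H i j * dXi i * Yi j
        - s • (H i j * Xi i * dYi j))
      = ∑ i, ∑ j, dH i j * Xi i * Yi j + ∑ i, ∑ j, H i j * dXi i * Yi j
        - s • ∑ i, ∑ j, H i j * Xi i * dYi j := by
    simp only [Finset.sum_add_distrib, Finset.sum_sub_distrib, Finset.smul_sum]
  have b4 : ∑ i, ∑ j, (dH i j + ∑ r, g i r * H r j + ∑ r, g j r * H i r) * Xi i * Yi j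
      = ∑ i, ∑ j, dH i j * Xi i * Yi j + ∑ i, ∑ j, (∑ r, g i r * H r j) * Xi i * Yi j
        + ∑ i, ∑ j, (∑ r, g j r * H i r) * Xi i * Yi j := by
    simp only [add_mul, Finset.sum_add_distrib]
  rw [b3, b1, b2, b4]
  simp only [smul_add, smul_sub, neg_smul, smul_smul, neg_mul, mul_neg, hs, one_smul, ← mul_assoc]
  abel_nf
  try module
end alg

/-! ### The Leibniz defect -/

theorem sgn_sq (p : ℕ) : (-1 : ℝ) ^ p * (-1 : ℝ) ^ p = 1 := by
  rw [← mul_pow]; simp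

theorem Ph_mul_ee (c : Fin n) (x : Pt n) (p : ℕ) (ξ : Form n) (k : Fin n) :
    Ph c x p ξ * ee k = (-1 : ℝ) ^ p • (ee k * Ph c x p ξ) := by
  rw [ee_mul, al_Ph, smul_mul_assoc, smul_smul, sgn_sq, one_smul]

theorem Ph_mul_gam (c : Fin n) (x : Pt n) (p : ℕ) (ξ : Form n)
    (Γ : Fin n → Fin n → Fin n → Pt n → ℝ) (m i : Fin n) :
    Ph c x p ξ * gam Γ x m i = (-1 : ℝ) ^ p • (gam Γ x m i * Ph c x p ξ) := by
  rw [gam_mul, al_Ph, smul_mul_assoc, smul_smul, sgn_sq, one_smul]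

theorem iiPh_mul_ee (c : Fin n) (x : Pt n) (p : ℕ) (ξ : Form n) (j k : Fin n) :
    ii j (Ph c x p ξ) * ee k = -((-1 : ℝ) ^ p • (ee k * ii j (Ph c x p ξ))) := by
  rw [ee_mul, al_ii, al_Ph, map_smul, neg_mul, smul_neg, neg_neg, smul_mul_assoc, smul_smul, sgn_sq,
    one_smul]

theorem iiPh_mul_gam (c : Fin n) (x : Pt n) (p : ℕ) (ξ : Form n)
    (Γ : Fin n → Fin n → Fin n → Pt n → ℝ) (m i j : Fin n) :
    ii j (Ph c x p ξ) * gam Γ x m i = -((-1 : ℝ) ^ p • (gam Γ x m i * ii j (Ph c x p ξ))) := by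
  rw [gam_mul, al_ii, al_Ph, map_smul, neg_mul, smul_neg, neg_neg, smul_mul_assoc, smul_smul,
    sgn_sq, one_smul]

theorem sum_ee_swap (r : ℝ) (F : Fin n → Fin n → Fin n → Lam n) :
    ∑ k, ee k * (r • ∑ i, ∑ j, F k i j) = r • ∑ i, ∑ j, ∑ k, ee k * F k i j := by
  simp only [mul_smul_comm, ← Finset.smul_sum, Finset.mul_sum]
  congr 1
  rw [Finset.sum_comm]
  refine Finset.sum_congr rfl fun i _ => ?_
  rw [Finset.sum_comm]

section leib
variable {ω : Fin n → Fin n → Pt n → ℝ} {Γ : Fin n → Fin n → Fin n → Pt n → ℝ} {U : Set (Pt n)}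

theorem H_central (hU : IsOpen U) {x : Pt n} (hx : x ∈ U) (c : Fin n)
    (hΓ : ∀ i j k, ContDiffOn ℝ (⊤ : ℕ∞) (Γ i j k) U) (i j : Fin n) (X : Lam n) :
    Ph c x 2 (Hform ω Γ i j) * X = X * Ph c x 2 (Hform ω Γ i j) := by
  rw [Ph_H hU hx c ω hΓ i j]
  simp only [smul_mul_assoc, mul_smul_comm, Finset.sum_mul, Finset.mul_sum, KK_mul]

/-- order zero Leibniz rule -/
theorem Ph_d_wedge (hU : IsOpen U) {x : Pt n} (hx : x ∈ U) (c : Fin n) {p q : ℕ} {ξ η : Form n}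
    (hξ : Good p ξ) (hη : Good q η) (sξ : SmoothOn U ξ) (sη : SmoothOn U η) :
    Ph c x (p + q + 1) (extd (p + q) (wedge p q ξ η))
      = Ph c x (p + 1) (extd p ξ) * Ph c x q η
        + (-1 : ℝ) ^ p • (Ph c x p ξ * Ph c x (q + 1) (extd q η)) := by
  rw [Ph_extd _ _ _ _ (Dep_wedge p q hξ.1 hη.1), Ph_extd _ _ _ _ hξ.1, Ph_extd _ _ _ _ hη.1]
  simp only [Finset.sum_mul, Finset.mul_sum, Finset.smul_sum, ← Finset.sum_add_distrib]
  refine Finset.sum_congr rfl fun k _ => ?_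
  rw [Ph_pdF_wedge k c hU hx p q sξ sη hξ.1 hη.1, mul_add, ← mul_assoc, ← mul_assoc, ← mul_assoc,
    Ph_mul_ee, smul_mul_assoc, smul_smul, sgn_sq, one_smul]

theorem Ph_d_Q (hU : IsOpen U) {x : Pt n} (hx : x ∈ U) (c : Fin n)
    (hω : ∀ i j, ContDiffOn ℝ (⊤ : ℕ∞) (ω i j) U)
    (hΓ : ∀ i j k, ContDiffOn ℝ (⊤ : ℕ∞) (Γ i j k) U) {p q : ℕ} {ξ η : Form n}
    (hξ : Good p ξ) (hη : Good q η) (sξ : SmoothOn U ξ) (sη : SmoothOn U η) :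
    Ph c x (p + q + 1) (extd (p + q) (Qcorr ω Γ p q ξ η)) = (2⁻¹ : ℝ) • ∑ i, ∑ j,
      ((∑ k, pd k (ω i j) x • ee k) * (Ph c x p (nabla Γ i p ξ) * Ph c x q (nabla Γ j q η))
        + ω i j x • ((∑ k, ee k * Ph c x p (pdF k (nabla Γ i p ξ))) * Ph c x q (nabla Γ j q η)
          + (-1 : ℝ) ^ p • (Ph c x p (nabla Γ i p ξ)
            * ∑ k, ee k * Ph c x q (pdF k (nabla Γ j q η))))) := by
  rw [Ph_extd _ _ _ _ (Good_Q ω Γ rfl hξ hη).1]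
  simp only [Ph_pdF_Q hU hx _ c hω hΓ hξ hη sξ sη]
  rw [sum_ee_swap]
  congr 1
  refine Finset.sum_congr rfl fun i _ => Finset.sum_congr rfl fun j _ => ?_
  simp only [Finset.sum_mul, Finset.mul_sum, Finset.smul_sum, ← Finset.sum_add_distrib]
  refine Finset.sum_congr rfl fun k _ => ?_
  rw [← mul_assoc (Ph c x p (nabla Γ i p ξ)) (ee k), Ph_mul_ee, smul_mul_assoc ((-1 : ℝ) ^ p),
    smul_smul ((-1 : ℝ) ^ p), sgn_sq, one_smul]
  simp only [mul_add, mul_smul_comm, smul_mul_assoc, mul_assoc]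

theorem Ph_d_Hat (hU : IsOpen U) {x : Pt n} (hx : x ∈ U) (c : Fin n)
    (hω : ∀ i j, ContDiffOn ℝ (⊤ : ℕ∞) (ω i j) U)
    (hΓ : ∀ i j k, ContDiffOn ℝ (⊤ : ℕ∞) (Γ i j k) U) {p q : ℕ} {ξ η : Form n}
    (hξ : Good p ξ) (hη : Good q η) (sξ : SmoothOn U ξ) (sη : SmoothOn U η) :
    Ph c x (p + q + 1) (extd (p + q) (HatCorr ω Γ p q ξ η)) = (-(-1 : ℝ) ^ p) • ∑ i, ∑ j,
      (Ph c x 3 (extd 2 (Hform ω Γ i j)) * ii i (Ph c x p ξ) * ii j (Ph c x q η)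
        + Ph c x 2 (Hform ω Γ i j) * (∑ k, ee k * ii i (Ph c x p (pdF k ξ))) * ii j (Ph c x q η)
        - (-1 : ℝ) ^ p • (Ph c x 2 (Hform ω Γ i j) * ii i (Ph c x p ξ)
            * ∑ k, ee k * ii j (Ph c x q (pdF k η)))) := by
  rw [Ph_extd _ _ _ _ (Good_Hat ω Γ rfl hξ hη).1]
  simp only [Ph_pdF_Hat hU hx _ c hω hΓ hξ hη sξ sη]
  rw [sum_ee_swap, pow_succ, mul_neg_one]
  congr 1
  refine Finset.sum_congr rfl fun i _ => Finset.sum_congr rfl fun j _ => ?_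
  rw [Ph_extd _ _ _ _ (Good_H ω Γ i j).1]
  simp only [Finset.sum_mul, Finset.mul_sum, Finset.smul_sum, ← Finset.sum_add_distrib,
    ← Finset.sum_sub_distrib]
  refine Finset.sum_congr rfl fun k _ => ?_
  have e1 := H_central (ω := ω) hU hx c hΓ i j (ee k)
  have e2 := iiPh_mul_ee c x p ξ i k
  have e3 : Ph c x 2 (Hform ω Γ i j) * ii i (Ph c x p ξ) * (ee k * ii j (Ph c x q (pdF k η)))
      = -((-1 : ℝ) ^ p • (ee k * (Ph c x 2 (Hform ω Γ i j) * ii i (Ph c x p ξ)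
        * ii j (Ph c x q (pdF k η))))) := by
    rw [mul_assoc, ← mul_assoc (ii i _), e2, neg_mul, mul_neg, smul_mul_assoc, mul_smul_comm]
    simp only [← mul_assoc]
    rw [e1]
  rw [e3, smul_neg, smul_smul, sgn_sq, one_smul, ← mul_assoc _ (ee k), e1]
  simp only [mul_add, add_mul, mul_assoc, sub_neg_eq_add]

/-- the closedness expression -/
noncomputable def Cform (ω : Fin n → Fin n → Pt n → ℝ) (Γ : Fin n → Fin n → Fin n → Pt n → ℝ)
    (i j : Fin n) : Form n :=
  extd 2 (Hform ω Γ i j)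
      + ∑ r, wedge 1 2 (GammaOne Γ i r) (Hform ω Γ r j)
      + ∑ r, wedge 1 2 (GammaOne Γ j r) (Hform ω Γ i r)

theorem Good_one (Γ : Fin n → Fin n → Fin n → Pt n → ℝ) (i r : Fin n) :
    Good 1 (GammaOne Γ i r) := by
  refine ⟨fun a b hab => ?_, trivial⟩
  unfold GammaOne
  rw [hab 0 (by omega)]

theorem Ph_one (c : Fin n) (x : Pt n) (Γ : Fin n → Fin n → Fin n → Pt n → ℝ) (i r : Fin n) :
    Ph c x 1 (GammaOne Γ i r) = gam Γ x i r := by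
  simp only [Ph, gam]
  simp only [Nat.cast_zero, zero_add, inv_one, one_smul]
  refine Finset.sum_congr rfl fun m _ => ?_
  rw [← Algebra.commutes, ← Algebra.smul_def]
  rfl

theorem Good_C (i j : Fin n) : Good 3 (Cform ω Γ i j) :=
  Good_add (Good_add (Good_extd (Good_H ω Γ i j))
    (Good_sum _ fun r => Good_wedge' (by norm_num) (Good_one Γ i r).1 (Good_H ω Γ r j).1))
    (Good_sum _ fun r => Good_wedge' (by norm_num) (Good_one Γ j r).1 (Good_H ω Γ i r).1)

theorem Ph_C (c : Fin n) (x : Pt n) (i j : Fin n) : Ph c x 3 (Cform ω Γ i j)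
    = Ph c x 3 (extd 2 (Hform ω Γ i j)) + ∑ r, gam Γ x i r * Ph c x 2 (Hform ω Γ r j)
      + ∑ r, gam Γ x j r * Ph c x 2 (Hform ω Γ i r) := by
  unfold Cform
  rw [Ph_add, Ph_add, Ph_sum, Ph_sum]
  congr 2
  · refine Finset.sum_congr rfl fun r _ => ?_
    rw [Ph_wedge' c x (by norm_num) (Good_one Γ i r).1 (Good_H ω Γ r j).1, Ph_one]
  · funext r
    rw [Ph_wedge' c x (by norm_num) (Good_one Γ j r).1 (Good_H ω Γ i r).1, Ph_one]

theorem defect (hU : IsOpen U) {x : Pt n} (hx : x ∈ U) (c : Fin n)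
    (hω : ∀ i j, ContDiffOn ℝ (⊤ : ℕ∞) (ω i j) U)
    (hΓ : ∀ i j k, ContDiffOn ℝ (⊤ : ℕ∞) (Γ i j k) U)
    (hanti : ∀ i j, ∀ x ∈ U, ω i j x = - ω j i x)
    (hpc : PoissonCompat U ω Γ) {p q : ℕ} {ξ η : Form n}
    (hξ : Good p ξ) (hη : Good q η) (sξ : SmoothOn U ξ) (sη : SmoothOn U η) :
    Ph c x (p + q + 1) (extd (p + q) (Qcorr ω Γ p q ξ η))
        + Ph c x (p + q + 1) (extd (p + q) (HatCorr ω Γ p q ξ η))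
      = (Ph c x (p + q + 1) (Qcorr ω Γ (p + 1) q (extd p ξ) η)
        + Ph c x (p + q + 1) (HatCorr ω Γ (p + 1) q (extd p ξ) η))
        + (-1 : ℝ) ^ p • (Ph c x (p + q + 1) (Qcorr ω Γ p (q + 1) ξ (extd q η))
          + Ph c x (p + q + 1) (HatCorr ω Γ p (q + 1) ξ (extd q η)))
        + ∑ i, ∑ j, (Ph c x 2 (Hform ω Γ i j) - Ph c x 2 (Hform ω Γ j i))
            * ii i (Ph c x p ξ) * Ph c x q (nabla Γ j q η)
        - (-1 : ℝ) ^ p • ∑ i, ∑ j, Ph c x 3 (Cform ω Γ i j)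
            * ii i (Ph c x p ξ) * ii j (Ph c x q η) := by
  rw [Ph_d_Q hU hx c hω hΓ hξ hη sξ sη, Ph_d_Hat hU hx c hω hΓ hξ hη sξ sη,
    Ph_Q ω Γ c x (by omega) (Good_extd hξ) hη, Ph_Q ω Γ c x (by omega) hξ (Good_extd hη),
    Ph_Hat ω Γ c x (by omega) (Good_extd hξ) hη, Ph_Hat ω Γ c x (by omega) hξ (Good_extd hη)]
  have hs := sgn_sq p
  have eQ := alg_Q (fun i j => ω i j x) (fun i j => ∑ k, pd k (ω i j) x • (ee k : Lam n))
    (gam Γ x) (KK Γ x)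
    (fun i j => Ph c x 2 (Hform ω Γ i j)) (fun i => Ph c x p (nabla Γ i p ξ))
    (fun i => Ph c x q (nabla Γ i q η)) (fun i => ii i (Ph c x p ξ)) (fun i => ii i (Ph c x q η))
    (fun i => Ph c x (p + 1) (nabla Γ i (p + 1) (extd p ξ)))
    (fun i => Ph c x (q + 1) (nabla Γ i (q + 1) (extd q η)))
    (fun i => ∑ k, ee k * Ph c x p (pdF k (nabla Γ i p ξ)))
    (fun i => ∑ k, ee k * Ph c x q (pdF k (nabla Γ i q η))) ((-1 : ℝ) ^ p) hs
    (fun i j => hanti i j x hx)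
    (fun i j => by
      have h0 : ∀ k, pd k (ω i j) x + ∑ m, ω m j x * Γ i m k x + ∑ m, ω i m x * Γ j m k x = 0 :=
        fun k => hpc i j k x hx
      have h1 : ∀ (f : Fin n → ℝ) (i : Fin n), ∑ m, f m • gam Γ x i m
          = ∑ k, (∑ m, f m * Γ i m k x) • (ee k : Lam n) := by
        intro f i
        simp only [gam, Finset.smul_sum, smul_smul, Finset.sum_smul]
        rw [Finset.sum_comm]
      simp only [h1 (fun m => ω m j x), h1 (fun m => ω i m x), ← Finset.sum_add_distrib, ← add_smul, h0, zero_smul,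
        Finset.sum_const_zero])
    (fun i => key1 c hU hx hΓ i p hξ sξ) (fun i => key1 c hU hx hΓ i q hη sη)
    (fun m i j => Ph_mul_gam c x p _ Γ m i) (fun m i j => (KK_mul Γ x m i _).symm)
    (fun i j => Ph_H hU hx c ω hΓ i j)
  have eB := alg_B (gam Γ x) (fun i j => Ph c x 2 (Hform ω Γ i j))
    (fun i j => Ph c x 3 (extd 2 (Hform ω Γ i j)))
    (fun i => Ph c x p (nabla Γ i p ξ))
    (fun i => Ph c x q (nabla Γ i q η)) (fun i => ii i (Ph c x p ξ)) (fun i => ii i (Ph c x q η))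
    (fun i => ii i (Ph c x (p + 1) (extd p ξ))) (fun i => ii i (Ph c x (q + 1) (extd q η)))
    (fun i => ∑ k, ee k * ii i (Ph c x p (pdF k ξ)))
    (fun i => ∑ k, ee k * ii i (Ph c x q (pdF k η))) ((-1 : ℝ) ^ p) hs
    (fun i => key2 c Γ i p hξ) (fun i => key2 c Γ i q hη)
    (fun m i j => iiPh_mul_gam c x p ξ Γ m i j)
    (fun i j m k => H_central hU hx c hΓ i j _)
  have e1 : (-1 : ℝ) ^ (p + 1 + 1) = (-1 : ℝ) ^ p := by ring
  have e2 : (-1 : ℝ) ^ (p + 1) = - (-1 : ℝ) ^ p := by ring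
  simp only [Ph_C, e1, e2]
  rw [eQ, eB]
  simp only [sub_mul, Finset.sum_sub_distrib, smul_add, neg_smul, smul_neg, smul_smul, hs,
    one_smul]
  abel
end leib

/-! ### Leibniz rule at order one -/

section final
variable {ω : Fin n → Fin n → Pt n → ℝ} {Γ : Fin n → Fin n → Fin n → Pt n → ℝ} {U : Set (Pt n)}

theorem Ph_extd_add (hU : IsOpen U) {x : Pt n} (hx : x ∈ U) (c : Fin n) {p : ℕ} {ξ η : Form n}
    (hξ : Good p ξ) (hη : Good p η) (sξ : SmoothOn U ξ) (sη : SmoothOn U η) :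
    Ph c x (p + 1) (extd p (ξ + η)) = Ph c x (p + 1) (extd p ξ) + Ph c x (p + 1) (extd p η) := by
  rw [Ph_extd _ _ _ _ (Good_add hξ hη).1, Ph_extd _ _ _ _ hξ.1, Ph_extd _ _ _ _ hη.1,
    ← Finset.sum_add_distrib]
  refine Finset.sum_congr rfl fun k _ => ?_
  rw [Ph_congr c _ (pdF_add k hU hx sξ sη), Ph_add, mul_add]

theorem Good_W (ω : Fin n → Fin n → Pt n → ℝ) (Γ : Fin n → Fin n → Fin n → Pt n → ℝ)
    {p q N : ℕ} (hN : p + q = N) {ξ η : FormL n}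
    (h1 : Good p ξ.1) (h2 : Good p ξ.2) (k1 : Good q η.1) (k2 : Good q η.2) :
    Good N (wedge1 ω Γ p q ξ η).1 ∧ Good N (wedge1 ω Γ p q ξ η).2 :=
  ⟨Good_wedge' hN h1.1 k1.1, Good_add (Good_add (Good_add (Good_wedge' hN h1.1 k2.1)
    (Good_wedge' hN h2.1 k1.1)) (Good_Q ω Γ hN h1 k1)) (Good_Hat ω Γ hN h1 k1)⟩

theorem Ph_W (ω : Fin n → Fin n → Pt n → ℝ) (Γ : Fin n → Fin n → Fin n → Pt n → ℝ)
    (c : Fin n) (x : Pt n) {p q N : ℕ} (hN : p + q = N) {ξ η : FormL n}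
    (h1 : Good p ξ.1) (h2 : Good p ξ.2) (k1 : Good q η.1) (k2 : Good q η.2) :
    Ph c x N (wedge1 ω Γ p q ξ η).2 = Ph c x p ξ.1 * Ph c x q η.2 + Ph c x p ξ.2 * Ph c x q η.1
      + Ph c x N (Qcorr ω Γ p q ξ.1 η.1) + Ph c x N (HatCorr ω Γ p q ξ.1 η.1) := by
  unfold wedge1
  rw [Ph_add, Ph_add, Ph_add, Ph_wedge' c x hN h1.1 k2.1, Ph_wedge' c x hN h2.1 k1.1]

theorem leib_two (hU : IsOpen U) {x : Pt n} (hx : x ∈ U) (c : Fin n)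
    (hω : ∀ i j, ContDiffOn ℝ (⊤ : ℕ∞) (ω i j) U)
    (hΓ : ∀ i j k, ContDiffOn ℝ (⊤ : ℕ∞) (Γ i j k) U)
    (hanti : ∀ i j, ∀ x ∈ U, ω i j x = - ω j i x)
    (hpc : PoissonCompat U ω Γ) {p q : ℕ} {ξ η : FormL n}
    (hξ : IsPFormL U p ξ) (hη : IsPFormL U q η) :
    Ph c x (p + q + 1) (extdL (p + q) (wedge1 ω Γ p q ξ η)).2
      = Ph c x (p + q + 1) (wedge1 ω Γ (p + 1) q (extdL p ξ) η
              + ((-1 : ℝ) ^ p) • wedge1 ω Γ p (q + 1) ξ (extdL q η)).2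
        + ∑ i, ∑ j, (Ph c x 2 (Hform ω Γ i j) - Ph c x 2 (Hform ω Γ j i))
            * ii i (Ph c x p ξ.1) * Ph c x q (nabla Γ j q η.1)
        - (-1 : ℝ) ^ p • ∑ i, ∑ j, Ph c x 3 (Cform ω Γ i j)
            * ii i (Ph c x p ξ.1) * ii j (Ph c x q η.1) := by
  have g1 := Good_of_IsPForm hξ.1
  have g2 := Good_of_IsPForm hξ.2
  have k1 := Good_of_IsPForm hη.1
  have k2 := Good_of_IsPForm hη.2
  have s1 := hξ.1.2.2
  have s2 := hξ.2.2.2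
  have t1 := hη.1.2.2
  have t2 := hη.2.2.2
  have GA := Good_wedge p q g1.1 k2.1
  have GB := Good_wedge p q g2.1 k1.1
  have GQ := Good_Q ω Γ (rfl : p + q = p + q) g1 k1
  have GH := Good_Hat ω Γ (rfl : p + q = p + q) g1 k1
  have SA := smooth_wedge p q s1 t2
  have SB := smooth_wedge p q s2 t1
  have SQ := smooth_Q hU hω hΓ p q s1 t1
  have SH := smooth_Hat hU hω hΓ p q s1 t1
  have L : Ph c x (p + q + 1) (extdL (p + q) (wedge1 ω Γ p q ξ η)).2
      = Ph c x (p + q + 1) (extd (p + q) (wedge p q ξ.1 η.2))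
        + Ph c x (p + q + 1) (extd (p + q) (wedge p q ξ.2 η.1))
        + (Ph c x (p + q + 1) (extd (p + q) (Qcorr ω Γ p q ξ.1 η.1))
        + Ph c x (p + q + 1) (extd (p + q) (HatCorr ω Γ p q ξ.1 η.1))) := by
    show Ph c x (p + q + 1) (extd (p + q) (wedge p q ξ.1 η.2 + wedge p q ξ.2 η.1
     + Qcorr ω Γ p q ξ.1 η.1 + HatCorr ω Γ p q ξ.1 η.1)) = _
    rw [Ph_extd_add hU hx c (Good_add (Good_add GA GB) GQ) GH
      (smooth_add (smooth_add SA SB) SQ) SH,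
      Ph_extd_add hU hx c (Good_add GA GB) GQ (smooth_add SA SB) SQ,
      Ph_extd_add hU hx c GA GB SA SB]
    abel
  have R : Ph c x (p + q + 1) (wedge1 ω Γ (p + 1) q (extdL p ξ) η
              + ((-1 : ℝ) ^ p) • wedge1 ω Γ p (q + 1) ξ (extdL q η)).2
      = Ph c x (p + q + 1) (wedge1 ω Γ (p + 1) q (extdL p ξ) η).2
        + (-1 : ℝ) ^ p • Ph c x (p + q + 1) (wedge1 ω Γ p (q + 1) ξ (extdL q η)).2 := by
    rw [Prod.snd_add, Prod.smul_snd, Ph_add, Ph_smul]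
  rw [L, R, defect hU hx c hω hΓ hanti hpc g1 k1 s1 t1, Ph_d_wedge hU hx c g1 k2 s1 t2,
    Ph_d_wedge hU hx c g2 k1 s2 t1,
    Ph_W ω Γ c x (by omega) (ξ := extdL p ξ) (Good_extd g1) (Good_extd g2) k1 k2,
    Ph_W ω Γ c x (by omega) (η := extdL q η) g1 g2 (Good_extd k1) (Good_extd k2)]
  simp only [extdL, smul_add]
  abel

theorem leib_of (hU : IsOpen U)
    (hω : ∀ i j, ContDiffOn ℝ (⊤ : ℕ∞) (ω i j) U)
    (hΓ : ∀ i j k, ContDiffOn ℝ (⊤ : ℕ∞) (Γ i j k) U)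
    (hanti : ∀ i j, ∀ x ∈ U, ω i j x = - ω j i x)
    (hpc : PoissonCompat U ω Γ) (hS : HSymm U ω Γ) (hC : HClosed U ω Γ) :
    LeibnizRule U ω Γ := by
  intro p q ξ η hξ hη a x hx
  have g1 := Good_of_IsPForm hξ.1
  have g2 := Good_of_IsPForm hξ.2
  have k1 := Good_of_IsPForm hη.1
  have k2 := Good_of_IsPForm hη.2
  have W0 := Good_W ω Γ (rfl : p + q = p + q) g1 g2 k1 k2
  have W1 := Good_W ω Γ (by omega : p + 1 + q = p + q + 1) (ξ := extdL p ξ)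
    (Good_extd g1) (Good_extd g2) k1 k2
  have W2 := Good_W ω Γ (by omega : p + (q + 1) = p + q + 1) (η := extdL q η)
    g1 g2 (Good_extd k1) (Good_extd k2)
  constructor
  · refine Ph_inj (a 0) x (p + q + 1) (Good_extd W0.1) (Good_add W1.1 (Good_smul _ W2.1)) ?_ a
    show Ph (a 0) x (p + q + 1) (extd (p + q) (wedge p q ξ.1 η.1))
      = Ph (a 0) x (p + q + 1) (wedge (p + 1) q (extd p ξ.1) η.1
        + (-1 : ℝ) ^ p • wedge p (q + 1) ξ.1 (extd q η.1))
    rw [Ph_d_wedge hU hx _ g1 k1 hξ.1.2.2 hη.1.2.2, Ph_add, Ph_smul,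
      Ph_wedge' _ x (by omega) (Good_extd g1).1 k1.1,
      Ph_wedge' _ x (by omega) g1.1 (Good_extd k1).1]
  · refine Ph_inj (a 0) x (p + q + 1) (Good_extd W0.2) (Good_add W1.2 (Good_smul _ W2.2)) ?_ a
    have := leib_two hU hx (a 0) hω hΓ hanti hpc hξ hη
    have e1 : ∀ i j, Ph (a 0) x 2 (Hform ω Γ i j) = Ph (a 0) x 2 (Hform ω Γ j i) :=
      fun i j => Ph_congr _ _ fun b => hS i j b x hx
    have e2 : ∀ i j, Ph (a 0) x 3 (Cform ω Γ i j) = 0 := fun i j => by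
      rw [← Ph_zero (a 0) x 3]
      exact Ph_congr _ _ fun b => hC i j b x hx
    simpa [e1, e2, extdL] using this

/-- coordinate one-forms -/
def dxF (i : Fin n) : Form n := fun a _ => if a 0 = i then 1 else 0
/-- coordinate functions -/
def xF (j : Fin n) : Form n := fun _ x => x j

theorem dxF_form (i : Fin n) : IsPFormL U 1 (dxF i, 0) := by
  refine ⟨⟨fun a b hab => ?_, fun a i j hi hj hij => by omega, fun a => contDiffOn_const⟩,
    fun a b _ => rfl, fun a i j hi hj hij => by omega, smooth_zero⟩
  funext x
  simp only [dxF, hab 0 (by omega)]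

theorem xF_form (i : Fin n) : IsPFormL U 0 (xF i, 0) := by
  refine ⟨⟨fun a b hab => rfl, fun a i j hi hj hij => by omega,
    fun a => (contDiff_apply ℝ ℝ i).contDiffOn⟩,
    fun a b _ => rfl, fun a i j hi hj hij => by omega, smooth_zero⟩

theorem Ph_dxF (c : Fin n) (x : Pt n) (i : Fin n) : Ph c x 1 (dxF i) = ee i := by
  simp [Ph, In, cns, dxF, apply_ite]

theorem ii_dxF (c : Fin n) (x : Pt n) (k i : Fin n) :
    ii k (Ph c x 1 (dxF i)) = if k = i then 1 else 0 := by
  have h := ii_ee_mul k i (1 : Lam n)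
  have h1 : ii k (1 : Lam n) = 0 := by simpa using ii_algebraMap k 1
  rw [Ph_dxF]
  rw [mul_one, h1, mul_zero, sub_zero] at h
  exact h

theorem Ph_nabla_xF (c : Fin n) (x : Pt n) (k j : Fin n) :
    Ph c x 0 (nabla Γ k 0 (xF j)) = if k = j then 1 else 0 := by
  have : pd k (fun y : Pt n => y j) x = if k = j then 1 else 0 := by
    unfold pd
    have := (ContinuousLinearMap.proj (R := ℝ) (φ := fun _ : Fin n => ℝ) j).hasFDerivAt (x := x)
    have h2 : fderiv ℝ (fun y : Pt n => y j) x = ContinuousLinearMap.proj j := this.fderiv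
    rw [h2]
    simp [Pi.single_apply, eq_comm]
  have h3 : pd k (xF j fun _ => c) x = if k = j then 1 else 0 := this
  simp only [Ph, nabla]
  rw [h3]
  simp [apply_ite]

theorem of_leib (hU : IsOpen U)
    (hω : ∀ i j, ContDiffOn ℝ (⊤ : ℕ∞) (ω i j) U)
    (hΓ : ∀ i j k, ContDiffOn ℝ (⊤ : ℕ∞) (Γ i j k) U)
    (hanti : ∀ i j, ∀ x ∈ U, ω i j x = - ω j i x)
    (hpc : PoissonCompat U ω Γ) (hL : LeibnizRule U ω Γ) :
    HSymm U ω Γ ∧ HClosed U ω Γ := by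
  have D : ∀ (p q : ℕ) (ξ η : FormL n), IsPFormL U p ξ → IsPFormL U q η → ∀ c, ∀ x ∈ U,
      ∑ i, ∑ j, (Ph c x 2 (Hform ω Γ i j) - Ph c x 2 (Hform ω Γ j i))
            * ii i (Ph c x p ξ.1) * Ph c x q (nabla Γ j q η.1)
        - (-1 : ℝ) ^ p • ∑ i, ∑ j, Ph c x 3 (Cform ω Γ i j)
            * ii i (Ph c x p ξ.1) * ii j (Ph c x q η.1) = 0 := by
    intro p q ξ η hξ hη c x hx
    have h := leib_two hU hx c hω hΓ hanti hpc hξ hη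
    rw [Ph_congr c (p + q + 1) (fun a => (hL p q ξ η hξ hη a x hx).2), add_sub_assoc] at h
    exact (left_eq_add.1 h)
  have S : ∀ i j c, ∀ x ∈ U, Ph c x 2 (Hform ω Γ i j) = Ph c x 2 (Hform ω Γ j i) := by
    intro i j c x hx
    have h := D 1 0 _ _ (dxF_form i) (xF_form j) c x hx
    simp only [ii_dxF, Ph_nabla_xF, ii_Ph_zero, mul_zero, Finset.sum_const_zero, smul_zero,
      sub_zero, mul_ite, mul_one, Finset.sum_ite_eq', Finset.mem_univ, if_true] at h
    exact sub_eq_zero.1 h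
  refine ⟨fun i j a x hx => Ph_inj (a 0) x 2 (Good_H ω Γ i j) (Good_H ω Γ j i)
    (S i j (a 0) x hx) a, fun i j a x hx => ?_⟩
  refine Ph_inj (a 0) x 3 (Good_C i j) (Good_zero 3) ?_ a
  have h := D 1 1 _ _ (dxF_form i) (dxF_form j) (a 0) x hx
  simp only [S _ _ _ x hx, sub_self, zero_mul, Finset.sum_const_zero, ii_dxF, mul_ite, mul_one,
    mul_zero] at h
  rw [Ph_zero]
  simpa using h
end final

/-! ### Associativity -/

section algassoc
variable {A : Type*} [Ring A] [Algebra ℝ A]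

theorem assoc_Q (ω : Fin n → Fin n → ℝ) (X Y Z : A) (Xn Yn Zn : Fin n → A) :
    ((2⁻¹ : ℝ) • ∑ i, ∑ j, ω i j • (Xn i * Yn j)) * Z
      + (2⁻¹ : ℝ) • ∑ i, ∑ j, ω i j • ((Xn i * Y + X * Yn i) * Zn j)
    = X * ((2⁻¹ : ℝ) • ∑ i, ∑ j, ω i j • (Yn i * Zn j))
      + (2⁻¹ : ℝ) • ∑ i, ∑ j, ω i j • (Xn i * (Yn j * Z + Y * Zn j)) := by
  simp only [add_mul, mul_add, smul_add, Finset.sum_add_distrib, smul_mul_assoc, mul_smul_comm,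
    Finset.sum_mul, Finset.mul_sum, mul_assoc]
  abel

theorem assoc_H (H : Fin n → Fin n → A) (X Y Z : A) (Xi Yi Zi : Fin n → A) (s t : ℝ)
    (hs : s * s = 1) (hH : ∀ i j, X * H i j = H i j * X) :
    ((-s) • ∑ i, ∑ j, H i j * Xi i * Yi j) * Z
      + (-(s * t)) • ∑ i, ∑ j, H i j * (Xi i * Y + s • (X * Yi i)) * Zi j
    = X * ((-t) • ∑ i, ∑ j, H i j * Yi i * Zi j)
      + (-s) • ∑ i, ∑ j, H i j * Xi i * (Yi j * Z + t • (Y * Zi j)) := by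
  have hst : s * t * s = t := by rw [mul_comm s t, mul_assoc, hs, mul_one]
  have h1 : ∀ i j, X * (H i j * (Yi i * Zi j)) = H i j * (X * (Yi i * Zi j)) := by
    intro i j; rw [← mul_assoc, hH, mul_assoc]
  simp only [add_mul, mul_add, smul_add, Finset.sum_add_distrib, smul_mul_assoc, mul_smul_comm,
    Finset.sum_mul, Finset.mul_sum, mul_assoc, h1, ← Finset.smul_sum, smul_smul, neg_mul]
  rw [← mul_assoc s t s, hst]
  abel
end algassoc

section fin2
variable {ω : Fin n → Fin n → Pt n → ℝ} {Γ : Fin n → Fin n → Fin n → Pt n → ℝ} {U : Set (Pt n)}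

theorem Ph_nabla_wedge (hU : IsOpen U) {x : Pt n} (hx : x ∈ U) (c : Fin n) {p q : ℕ}
    {ξ η : Form n} (i : Fin n)
    (hξ : Good p ξ) (hη : Good q η) (sξ : SmoothOn U ξ) (sη : SmoothOn U η) :
    Ph c x (p + q) (nabla Γ i (p + q) (wedge p q ξ η))
      = Ph c x p (nabla Γ i p ξ) * Ph c x q η + Ph c x p ξ * Ph c x q (nabla Γ i q η) := by
  rw [Ph_nabla c Γ i _ (Good_wedge p q hξ.1 hη.1), Ph_nabla c Γ i _ hξ, Ph_nabla c Γ i _ hη,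
    Ph_pdF_wedge i c hU hx p q sξ sη hξ.1 hη.1, Ph_wedge c x p q hξ.1 hη.1, GG_mul]
  simp only [sub_mul, mul_sub]
  abel

theorem ii_Ph_wedge (c : Fin n) (x : Pt n) {p q : ℕ} {ξ η : Form n} (i : Fin n)
    (hξ : Good p ξ) (hη : Good q η) :
    ii i (Ph c x (p + q) (wedge p q ξ η))
      = ii i (Ph c x p ξ) * Ph c x q η + (-1 : ℝ) ^ p • (Ph c x p ξ * ii i (Ph c x q η)) := by
  rw [Ph_wedge c x p q hξ.1 hη.1, ii_mul, al_Ph, smul_mul_assoc]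

theorem assoc_main (hU : IsOpen U)
    (hΓ : ∀ i j k, ContDiffOn ℝ (⊤ : ℕ∞) (Γ i j k) U) : WedgeAssoc U ω Γ := by
  intro p q r ξ η ζ hξ hη hζ a x hx
  have g1 := Good_of_IsPForm hξ.1
  have g2 := Good_of_IsPForm hξ.2
  have k1 := Good_of_IsPForm hη.1
  have k2 := Good_of_IsPForm hη.2
  have l1 := Good_of_IsPForm hζ.1
  have l2 := Good_of_IsPForm hζ.2
  have s1 := hξ.1.2.2
  have t1 := hη.1.2.2
  have u1 := hζ.1.2.2
  have Wl := Good_W ω Γ (rfl : p + q = p + q) g1 g2 k1 k2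
  have Wr := Good_W ω Γ (rfl : q + r = q + r) k1 k2 l1 l2
  have e : p + (q + r) = p + q + r := by omega
  have WL := Good_W ω Γ (rfl : p + q + r = p + q + r) Wl.1 Wl.2 l1 l2
  have WR := Good_W ω Γ e g1 g2 Wr.1 Wr.2
  generalize hc : a 0 = c
  have f1 : Ph c x (p + q) (wedge1 ω Γ p q ξ η).1 = Ph c x p ξ.1 * Ph c x q η.1 :=
    Ph_wedge c x p q g1.1 k1.1
  have f2 : Ph c x (q + r) (wedge1 ω Γ q r η ζ).1 = Ph c x q η.1 * Ph c x r ζ.1 :=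
    Ph_wedge c x q r k1.1 l1.1
  constructor
  · refine Ph_inj c x (p + q + r) WL.1 WR.1 ?_ a
    show Ph c x (p + q + r) (wedge (p + q) r (wedge1 ω Γ p q ξ η).1 ζ.1)
      = Ph c x (p + q + r) (wedge p (q + r) ξ.1 (wedge1 ω Γ q r η ζ).1)
    rw [Ph_wedge' c x rfl Wl.1.1 l1.1, Ph_wedge' c x e g1.1 Wr.1.1, f1, f2, mul_assoc]
  · refine Ph_inj c x (p + q + r) WL.2 WR.2 ?_ a
    rw [Ph_W ω Γ c x rfl Wl.1 Wl.2 l1 l2, Ph_W ω Γ c x e g1 g2 Wr.1 Wr.2, f1, f2,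
      Ph_W ω Γ c x rfl g1 g2 k1 k2, Ph_W ω Γ c x rfl k1 k2 l1 l2,
      Ph_Q ω Γ c x rfl Wl.1 l1, Ph_Q ω Γ c x e g1 Wr.1, Ph_Q ω Γ c x rfl g1 k1,
      Ph_Q ω Γ c x rfl k1 l1,
      Ph_Hat ω Γ c x rfl Wl.1 l1, Ph_Hat ω Γ c x e g1 Wr.1, Ph_Hat ω Γ c x rfl g1 k1,
      Ph_Hat ω Γ c x rfl k1 l1]
    have n1 : ∀ i, Ph c x (p + q) (nabla Γ i (p + q) (wedge1 ω Γ p q ξ η).1) = _ :=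
      fun i => Ph_nabla_wedge hU hx c i g1 k1 s1 t1
    have n2 : ∀ i, Ph c x (q + r) (nabla Γ i (q + r) (wedge1 ω Γ q r η ζ).1) = _ :=
      fun i => Ph_nabla_wedge hU hx c i k1 l1 t1 u1
    have i1 := fun i => ii_Ph_wedge c x i g1 k1
    have i2 := fun i => ii_Ph_wedge c x i k1 l1
    simp only [Ph_wedge c x p q g1.1 k1.1] at i1
    simp only [Ph_wedge c x q r k1.1 l1.1] at i2
    have hq := assoc_Q (fun i j => ω i j x) (Ph c x p ξ.1) (Ph c x q η.1) (Ph c x r ζ.1)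
      (fun i => Ph c x p (nabla Γ i p ξ.1)) (fun i => Ph c x q (nabla Γ i q η.1))
      (fun i => Ph c x r (nabla Γ i r ζ.1))
    have hh := assoc_H (fun i j => Ph c x 2 (Hform ω Γ i j))
      (Ph c x p ξ.1) (Ph c x q η.1) (Ph c x r ζ.1)
      (fun i => ii i (Ph c x p ξ.1)) (fun i => ii i (Ph c x q η.1))
      (fun i => ii i (Ph c x r ζ.1)) ((-1 : ℝ) ^ p) ((-1 : ℝ) ^ q) (sgn_sq p)
      (fun i j => (H_central hU hx c hΓ i j _).symm)
    have e1 : (-1 : ℝ) ^ (p + q + 1) = - ((-1 : ℝ) ^ p * (-1 : ℝ) ^ q) := by ring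
    have e2 : ∀ p : ℕ, (-1 : ℝ) ^ (p + 1) = - (-1 : ℝ) ^ p := fun p => by ring
    simp only [f1, f2, n1, n2, i1, i2, e1, e2 p, e2 q]
    rw [add_mul, add_mul, add_mul, mul_add, mul_add, mul_add]
    linear_combination (norm := skip) hq + hh
    simp only [mul_assoc]
    abel
end fin2

/-- for Poisson-compatible `(ω, ∇)`, the product `∧₁` is associative, and
the undeformed `d` satisfies the graded Leibniz rule for `∧₁` if and only if
`H^{ij} = H^{ji}` and `dH^{ij} + Γ^i_{rp} dx^p ∧ H^{rj} + Γ^j_{rp} dx^p ∧ H^{ir} = 0`. -/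
theorem statement_9 (U : Set (Pt n)) (hU : IsOpen U)
    (ω : Fin n → Fin n → Pt n → ℝ)
    (Γ : Fin n → Fin n → Fin n → Pt n → ℝ)
    (hωs : ∀ i j, ContDiffOn ℝ (⊤ : ℕ∞) (ω i j) U)
    (hΓs : ∀ i j k, ContDiffOn ℝ (⊤ : ℕ∞) (Γ i j k) U)
    (hanti : ∀ i j, ∀ x ∈ U, ω i j x = - ω j i x)
    (hpc : PoissonCompat U ω Γ) :
    WedgeAssoc U ω Γ ∧
    (LeibnizRule U ω Γ ↔ (HSymm U ω Γ ∧ HClosed U ω Γ)) := by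
  exact ⟨assoc_main hU hΓs, fun h => of_leib hU hωs hΓs hanti hpc h,
    fun h => leib_of hU hωs hΓs hanti hpc h.1 h.2⟩

end Stmt9
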